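/- Assume hypothesis (H). Then there exist constants κ₃ > 0, κ₄ > 0 and h₀ > 0, depending only on N, a, b, c and u_b, with the following property. For every straight mesh on [a,c] and inverse mesh on [0,u_b] whose maximal step size h satisfies h ≤ h₀, and for every scheme pair (ũ, x̃) additionally satisfying the inequalities 0 < ũ(x) < u_b, ũ'(x) > 0, ũ''(x) ≥ 0 on (a,c] and c < x̃(v), x̃'(v) > 0, x̃''(v) ≤ 0 on (ũ(c), u_b] (second derivatives taken on mesh subintervals), there exists ǔ ∈ C²([a,b]) with ǔ''(x) = 𝒩(ǔ(x), x) on [a,b], ǔ(b) = u_b and ǔ'(b) = 1/x̃'(u_b), such that ǔ is strictly increasing, its image contains [ũ(c), u_b], and, writing x̌ = ǔ⁻¹ for the inverse function of ǔ, one has max_{x ∈ [a,c]} max(|ũ(x) − ǔ(x)|, |ũ'(x) − ǔ'(x)|) ≤ κ₃·h² and max_{v ∈ [ũ(c), u_b]} max(|x̃(v) − x̌(v)|, |x̃'(v) − x̌'(v)|) ≤ κ₄·h². -/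

import Mathlib

open Set Filter

noncomputable section

/-- Partial derivative of a two-argument function with respect to its first argument. -/
def pd1 (f : ℝ → ℝ → ℝ) (u x : ℝ) : ℝ := deriv (fun t => f t x) u

/-- Partial derivative of a two-argument function with respect to its second argument. -/
def pd2 (f : ℝ → ℝ → ℝ) (u x : ℝ) : ℝ := deriv (fun s => f u s) x

/-- The nonlinearity `𝒩(u,x) = N(u,x)·u`. -/
def Ncal (N : ℝ → ℝ → ℝ) (u x : ℝ) : ℝ := N u x * u

/-- `u` is twice continuously differentiable on `s`, with first derivative `u'`
and second derivative `u''` (derivatives within `s`). -/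
def IsC2On (u u' u'' : ℝ → ℝ) (s : Set ℝ) : Prop :=
  (∀ x ∈ s, HasDerivWithinAt u (u' x) s x) ∧
  (∀ x ∈ s, HasDerivWithinAt u' (u'' x) s x) ∧
  ContinuousOn u'' s

/-- The straight boundary value problem: `u ∈ C²([a,b])`, `u'' = 𝒩(u(x),x)` on `[a,b]`,
`u(a) = 0`, `u(b) = ub`. -/
def IsStraightBVP (N : ℝ → ℝ → ℝ) (a b ub : ℝ) (u u' u'' : ℝ → ℝ) : Prop :=
  IsC2On u u' u'' (Icc a b) ∧
  (∀ x ∈ Icc a b, u'' x = Ncal N (u x) x) ∧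
  u a = 0 ∧ u b = ub

/-- Hypothesis (H): `N`, `∂N/∂x`, `∂N/∂u`, `∂²N/∂x∂u`, `∂²N/∂u²` are all
nonnegative for `u ≥ 0` and `x ∈ [a,b]`. -/
def HypH (N : ℝ → ℝ → ℝ) (a b : ℝ) : Prop :=
  ∀ u : ℝ, 0 ≤ u → ∀ x ∈ Icc a b,
    0 ≤ N u x ∧ 0 ≤ pd2 N u x ∧ 0 ≤ pd1 N u x ∧
    0 ≤ pd2 (pd1 N) u x ∧ 0 ≤ pd1 (pd1 N) u x

/-- A mesh: finitely many strictly increasing points `pt 0 < pt 1 < ⋯ < pt n`. -/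
structure Mesh where
  n : ℕ
  pt : ℕ → ℝ
  npos : 0 < n
  mono : ∀ i < n, pt i < pt (i + 1)

/-- The coefficient `α_i(p,q,x)` of the straight discretized equation,
where `xi` is the mesh point `x_i`. -/
def alphaC (N : ℝ → ℝ → ℝ) (xi p q x : ℝ) : ℝ :=
  (pd1 N q xi * p + pd2 N q xi) * (x - xi) + N q xi

/-- The coefficient `β_i(p,q,v)` of the inverse discretized equation,
where `ui` is the (shifted) mesh point `ū_i`. -/
def betaC (N : ℝ → ℝ → ℝ) (ui p q v : ℝ) : ℝ :=
  -(pd1 (Ncal N) ui q + pd2 (Ncal N) ui q * p) * (v - ui) - Ncal N ui q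

/-- Shifted mesh knots `ū_i = max(u_i, s)`. -/
def ubar (m : Mesh) (s : ℝ) (i : ℕ) : ℝ := max (m.pt i) s

/-- A straight scheme solution on `[a,c]` with respect to the mesh `m`:
`ũ ∈ C¹([a,c])` and on each mesh subinterval `[x_i, x_{i+1}]` the second
derivative of `ũ` equals `α_i(ũ'(x_i), ũ(x_i), x)·ũ(x)`. -/
def IsStraightSol (N : ℝ → ℝ → ℝ) (a c : ℝ) (m : Mesh) (u u' : ℝ → ℝ) : Prop :=
  (∀ x ∈ Icc a c, HasDerivWithinAt u (u' x) (Icc a c) x) ∧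
  ContinuousOn u' (Icc a c) ∧
  ∀ i < m.n, ∀ x ∈ Icc (m.pt i) (m.pt (i + 1)),
    HasDerivWithinAt u'
      (alphaC N (m.pt i) (u' (m.pt i)) (u (m.pt i)) x * u x)
      (Icc (m.pt i) (m.pt (i + 1))) x

/-- An inverse scheme solution on `[s, ub]` with respect to the mesh `m` (shifted by `s`):
`x̃ ∈ C¹([s,ub])` and on each subinterval `[ū_i, ū_{i+1}]` the second derivative of `x̃`
equals `β_i(x̃'(ū_i), x̃(ū_i), v)·(x̃'(v))³`. -/
def IsInvSol (N : ℝ → ℝ → ℝ) (ub : ℝ) (m : Mesh) (s : ℝ) (X X' : ℝ → ℝ) : Prop :=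
  (∀ v ∈ Icc s ub, HasDerivWithinAt X (X' v) (Icc s ub) v) ∧
  ContinuousOn X' (Icc s ub) ∧
  ∀ i < m.n, ∀ v ∈ Icc (ubar m s i) (ubar m s (i + 1)),
    HasDerivWithinAt X'
      (betaC N (ubar m s i) (X' (ubar m s i)) (X (ubar m s i)) v * (X' v) ^ 3)
      (Icc (ubar m s i) (ubar m s (i + 1))) v

/-- A scheme pair `(ũ, x̃)`. -/
def IsSchemePair (N : ℝ → ℝ → ℝ) (a b c ub : ℝ) (ms mi : Mesh)
    (u u' X X' : ℝ → ℝ) : Prop :=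
  IsStraightSol N a c ms u u' ∧ u a = 0 ∧ 0 < u c ∧ u c < ub ∧ u' c ≠ 0 ∧
  IsInvSol N ub mi (u c) X X' ∧ X ub = b ∧ X (u c) = c ∧ X' (u c) = 1 / u' c

/-- A scheme pair additionally satisfying the sign inequalities
`0 < ũ < u_b`, `ũ' > 0`, `ũ'' ≥ 0` on `(a,c]`, and `c < x̃`, `x̃' > 0`, `x̃'' ≤ 0`
on `(ũ(c), u_b]` (second derivatives taken on the mesh subintervals). -/
def GoodPair (N : ℝ → ℝ → ℝ) (a b c ub : ℝ) (ms mi : Mesh)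
    (u u' X X' : ℝ → ℝ) : Prop :=
  IsSchemePair N a b c ub ms mi u u' X X' ∧
  (∀ x ∈ Ioc a c, 0 < u x ∧ u x < ub ∧ 0 < u' x) ∧
  (∀ i < ms.n, ∀ x ∈ Icc (ms.pt i) (ms.pt (i + 1)), x ∈ Ioc a c →
    0 ≤ alphaC N (ms.pt i) (u' (ms.pt i)) (u (ms.pt i)) x * u x) ∧
  (∀ v ∈ Ioc (u c) ub, c < X v ∧ 0 < X' v) ∧
  (∀ i < mi.n, ∀ v ∈ Icc (ubar mi (u c) i) (ubar mi (u c) (i + 1)), v ∈ Ioc (u c) ub →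
    betaC N (ubar mi (u c) i) (X' (ubar mi (u c) i)) (X (ubar mi (u c) i)) v * (X' v) ^ 3 ≤ 0)

/-- All steps of the straight mesh `ms` and of the (shifted) inverse mesh `mi`
are of size at most `h`. -/
def StepLe (ms mi : Mesh) (s h : ℝ) : Prop :=
  (∀ i < ms.n, ms.pt (i + 1) - ms.pt i ≤ h) ∧
  (∀ i < mi.n, ubar mi s (i + 1) - ubar mi s i ≤ h)

/-!
The inverse of `x̃` continues `ũ` from `[a, c]` to a `C¹` function `y` on `[a, b]` which is
increasing and convex by the sign inequalities. Both schemes bound `y''` by `A y`, with `A`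
independent of the meshes, so Grönwall's inequality bounds the slopes of `y` away from `0` and `∞`
and makes `y'` Lipschitz, uniformly in the meshes. The right-hand sides of the two schemes come from
first-order Taylor expansions of `N` along `ũ` and of `𝒩` along `x̃`; hence `y` solves
`y'' = 𝒩(y, x)` up to an error `O(h²)`. Stability of the initial value problem posed backwards from
`b` then yields an exact solution `O(h²)`-close to `y` in `C¹`, and as all slopes are bounded below,
the estimate passes to the inverse functions.
-/

section LeftDerivative

lemma continuousOn_comp_neg {F : Type*} [TopologicalSpace F] {f : ℝ → F} {p q : ℝ}
    (hf : ContinuousOn f (Icc p q)) : ContinuousOn (fun t => f (-t)) (Icc (-q) (-p)) :=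
  hf.comp continuous_neg.continuousOn fun _ => neg_mem_Icc_iff.2

variable {E : Type*} [NormedAddCommGroup E] [NormedSpace ℝ E]

lemma hasDerivWithinAt_comp_neg_Ici {f : ℝ → E} {d : E} {t : ℝ}
    (h : HasDerivWithinAt f d (Iic (-t)) (-t)) :
    HasDerivWithinAt (fun s => f (-s)) (-d) (Ici t) t := by
  have hneg : HasDerivWithinAt (fun s : ℝ => -s) (-1) (Ici t) t :=
    (hasDerivAt_neg t).hasDerivWithinAt
  simpa [Function.comp_def] using
    HasDerivWithinAt.scomp t h hneg fun s hs => mem_Iic.2 (neg_le_neg hs)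

lemma hasDerivWithinAt_Iic_of_Icc {f : ℝ → E} {d : E} {p q x : ℝ}
    (h : HasDerivWithinAt f d (Icc p q) x) (hx : x ∈ Ioc p q) :
    HasDerivWithinAt f d (Iic x) x :=
  h.mono_of_mem_nhdsWithin (mem_of_superset (Icc_mem_nhdsLE hx.1) (Icc_subset_Icc_right hx.2))

lemma monotoneOn_of_left_deriv_nonneg {f f' : ℝ → ℝ} {p q : ℝ} (hf : ContinuousOn f (Icc p q))
    (hf' : ∀ x ∈ Ioc p q, HasDerivWithinAt f (f' x) (Iic x) x)
    (hnonneg : ∀ x ∈ Ioc p q, 0 ≤ f' x) : MonotoneOn f (Icc p q) := by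
  intro x hx z hz hxz
  have hsub : Ico (-z) (-x) ⊆ Ico (-q) (-p) :=
    Ico_subset_Ico (neg_le_neg hz.2) (neg_le_neg hx.1)
  have hle : f (- -x) ≤ f z :=
    image_le_of_deriv_right_le_deriv_boundary (B := fun _ => f z) (B' := fun _ => 0)
      (continuousOn_comp_neg (hf.mono (Icc_subset_Icc hx.1 hz.2)))
      (fun t ht => hasDerivWithinAt_comp_neg_Ici (hf' (-t) (neg_mem_Ioc_iff.2 (hsub ht))))
      (by simp) continuousOn_const (fun _ _ => hasDerivWithinAt_const ..)
      (fun t ht => neg_nonpos.2 (hnonneg (-t) (neg_mem_Ioc_iff.2 (hsub ht))))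
      (right_mem_Icc.2 (neg_le_neg hxz))
  rwa [neg_neg] at hle

lemma sub_le_mul_of_left_deriv_le {f f' : ℝ → ℝ} {p q C : ℝ} (hf : ContinuousOn f (Icc p q))
    (hf' : ∀ x ∈ Ioc p q, HasDerivWithinAt f (f' x) (Iic x) x) (hC : ∀ x ∈ Ioc p q, f' x ≤ C)
    {x z : ℝ} (hx : x ∈ Icc p q) (hz : z ∈ Icc p q) (hxz : x ≤ z) :
    f z - f x ≤ C * (z - x) := by
  have hmono : MonotoneOn (fun t => C * t - f t) (Icc p q) :=
    monotoneOn_of_left_deriv_nonneg (by fun_prop)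
      (fun t ht => ((hasDerivWithinAt_id t _).const_mul C).fun_sub (hf' t ht))
      (fun t ht => by simpa using hC t ht)
  linarith [hmono hx hz hxz]

lemma le_mul_exp_of_left_deriv_le {f f' : ℝ → ℝ} {p q L : ℝ} (hf : ContinuousOn f (Icc p q))
    (hf' : ∀ x ∈ Ioc p q, HasDerivWithinAt f (f' x) (Iic x) x)
    (hL : ∀ x ∈ Ioc p q, f' x ≤ L * f x) {x z : ℝ} (hx : x ∈ Icc p q) (hz : z ∈ Icc p q)
    (hxz : x ≤ z) : f z ≤ f x * Real.exp (L * (z - x)) := by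
  have hexp (t : ℝ) : HasDerivAt (fun t => Real.exp (-L * t)) (Real.exp (-L * t) * -L) t := by
    simpa using ((hasDerivAt_id t).const_mul (-L)).exp
  have hmono : MonotoneOn (fun t => -(f t * Real.exp (-L * t))) (Icc p q) :=
    monotoneOn_of_left_deriv_nonneg (by fun_prop)
      (fun t ht => ((hf' t ht).mul (hexp t).hasDerivWithinAt).fun_neg)
      (fun t ht => by nlinarith [hL t ht, Real.exp_pos (-L * t)])
  have hle : f z * Real.exp (-L * z) ≤ f x * Real.exp (-L * x) :=
    neg_le_neg_iff.1 (hmono hx hz hxz)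
  calc f z = f z * Real.exp (-L * z) * Real.exp (L * z) := by
        rw [mul_assoc, ← Real.exp_add]; simp
    _ ≤ f x * Real.exp (-L * x) * Real.exp (L * z) := by gcongr
    _ = f x * Real.exp (L * (z - x)) := by rw [mul_assoc, ← Real.exp_add]; ring_nf

end LeftDerivative

section MeanValue

variable {f f' g : ℝ → ℝ} {s t : Set ℝ} {δ : ℝ}

lemma exists_mem_uIcc_sub_eq_mul (hs : Convex ℝ s)
    (hf : ∀ x ∈ s, HasDerivWithinAt f (f' x) s x) {x z : ℝ} (hx : x ∈ s) (hz : z ∈ s) :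
    ∃ ξ ∈ s ∩ uIcc x z, f z - f x = f' ξ * (z - x) := by
  obtain ⟨ξ, hξ, h⟩ := domain_mvt (fun t ht => (hf t ht).hasFDerivWithinAt) hs hx hz
  refine ⟨ξ, ⟨hs.segment_subset hx hz hξ, segment_eq_uIcc x z ▸ hξ⟩, h.trans ?_⟩
  simp [mul_comm]

lemma mul_abs_sub_le_abs_image_sub (hs : Convex ℝ s)
    (hf : ∀ x ∈ s, HasDerivWithinAt f (f' x) s x) (hδ : 0 < δ) (hf' : ∀ x ∈ s, δ ≤ f' x)
    {x z : ℝ} (hx : x ∈ s) (hz : z ∈ s) : δ * |z - x| ≤ |f z - f x| := by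
  obtain ⟨ξ, hξ, h⟩ := exists_mem_uIcc_sub_eq_mul hs hf hx hz
  rw [h, abs_mul, abs_of_pos (hδ.trans_le (hf' ξ hξ.1))]
  gcongr
  exact hf' ξ hξ.1

lemma strictMonoOn_of_le_deriv (hs : Convex ℝ s)
    (hf : ∀ x ∈ s, HasDerivWithinAt f (f' x) s x) (hδ : 0 < δ) (hf' : ∀ x ∈ s, δ ≤ f' x) :
    StrictMonoOn f s :=
  strictMonoOn_of_hasDerivWithinAt_pos hs (fun x hx => (hf x hx).continuousWithinAt)
    (fun x hx => (hf x (interior_subset hx)).mono interior_subset)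
    (fun x hx => hδ.trans_le (hf' x (interior_subset hx)))

lemma bijOn_Icc_of_strictMonoOn {p q : ℝ} (hpq : p ≤ q) (hf : ContinuousOn f (Icc p q))
    (hmono : StrictMonoOn f (Icc p q)) : BijOn f (Icc p q) (Icc (f p) (f q)) := by
  rw [← hf.image_Icc_of_monotoneOn hpq hmono.monotoneOn]
  exact hmono.injOn.bijOn_image

lemma hasDerivWithinAt_of_rightInvOn (hs : Convex ℝ s)
    (hf : ∀ x ∈ s, HasDerivWithinAt f (f' x) s x) (hδ : 0 < δ) (hf' : ∀ x ∈ s, δ ≤ f' x)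
    (hgs : MapsTo g t s) (hfg : RightInvOn g f t) {v : ℝ} (hv : v ∈ t) :
    HasDerivWithinAt g (f' (g v))⁻¹ t v := by
  have hlip : LipschitzOnWith (Real.toNNReal δ⁻¹) g t :=
    LipschitzOnWith.of_dist_le_mul fun v hv w hw => by
      have h := mul_abs_sub_le_abs_image_sub hs hf hδ hf' (hgs hw) (hgs hv)
      rw [hfg hv, hfg hw] at h
      rw [Real.coe_toNNReal _ (inv_pos.2 hδ).le, inv_mul_eq_div, le_div_iff₀' hδ]
      exact h
  have htendsto : Tendsto g (nhdsWithin v t) (nhdsWithin (g v) s) :=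
    (hlip.continuousOn v hv).tendsto_nhdsWithin hgs
  have hne : f' (g v) ≠ 0 := (hδ.trans_le (hf' _ (hgs hv))).ne'
  have hinv := (hf _ (hgs hv)).hasFDerivWithinAt.of_comp_of_leftInverse htendsto
    (hasFDerivWithinAt_id v _) (eventually_nhdsWithin_of_forall hfg)
    (f'symm := .toSpanSingleton ℝ (f' (g v))⁻¹) (fun _ => by simp [hne]) hv
  simpa using hinv.hasDerivWithinAt

lemma mul_sub_le_sub_of_monotoneOn_deriv (hs : Convex ℝ s)
    (hf : ∀ x ∈ s, HasDerivWithinAt f (f' x) s x) (hmono : MonotoneOn f' s) {x z : ℝ}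
    (hx : x ∈ s) (hz : z ∈ s) (hxz : x ≤ z) : f' x * (z - x) ≤ f z - f x := by
  obtain ⟨ξ, ⟨hξs, hξ⟩, h⟩ := exists_mem_uIcc_sub_eq_mul hs hf hx hz
  rw [uIcc_of_le hxz] at hξ
  exact h ▸ mul_le_mul_of_nonneg_right (hmono hx hξs hξ.1) (sub_nonneg.2 hxz)

lemma sub_le_mul_sub_of_monotoneOn_deriv (hs : Convex ℝ s)
    (hf : ∀ x ∈ s, HasDerivWithinAt f (f' x) s x) (hmono : MonotoneOn f' s) {x z : ℝ}
    (hx : x ∈ s) (hz : z ∈ s) (hxz : x ≤ z) : f z - f x ≤ f' z * (z - x) := by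
  obtain ⟨ξ, ⟨hξs, hξ⟩, h⟩ := exists_mem_uIcc_sub_eq_mul hs hf hx hz
  rw [uIcc_of_le hxz] at hξ
  exact h ▸ mul_le_mul_of_nonneg_right (hmono hξs hz hξ.2) (sub_nonneg.2 hxz)

lemma exists_inverse_Icc {p q : ℝ} (hpq : p ≤ q)
    (hf : ∀ x ∈ Icc p q, HasDerivWithinAt f (f' x) (Icc p q) x) (hδ : 0 < δ)
    (hf' : ∀ x ∈ Icc p q, δ ≤ f' x) :
    ∃ g : ℝ → ℝ, InvOn g f (Icc p q) (Icc (f p) (f q)) ∧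
      MapsTo g (Icc (f p) (f q)) (Icc p q) ∧ MonotoneOn g (Icc (f p) (f q)) ∧
      ∀ v ∈ Icc (f p) (f q), HasDerivWithinAt g (f' (g v))⁻¹ (Icc (f p) (f q)) v := by
  have hmono := strictMonoOn_of_le_deriv (convex_Icc p q) hf hδ hf'
  have hbij := bijOn_Icc_of_strictMonoOn hpq (fun x hx => (hf x hx).continuousWithinAt) hmono
  have hinv := hbij.invOn_invFunOn
  have hmaps := hbij.surjOn.mapsTo_invFunOn
  exact ⟨Function.invFunOn f (Icc p q), hinv, hmaps,
    Function.monotoneOn_of_rightInvOn_of_mapsTo hmono.monotoneOn hinv.2 hmaps,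
    fun v hv => hasDerivWithinAt_of_rightInvOn (convex_Icc p q) hf hδ hf' hmaps hinv.2 hv⟩

lemma abs_inv_sub_inv_le {m p q : ℝ} (hm : 0 < m) (hp : m ≤ p) (hq : m ≤ q) :
    |p⁻¹ - q⁻¹| ≤ |p - q| / m ^ 2 := by
  have hp₀ : 0 < p := hm.trans_le hp
  have hq₀ : 0 < q := hm.trans_le hq
  rw [inv_sub_inv hp₀.ne' hq₀.ne', abs_div, abs_sub_comm, abs_of_pos (mul_pos hp₀ hq₀)]
  gcongr
  nlinarith

lemma abs_inverse_sub_le_and_abs_inverse_deriv_sub_le {h h' : ℝ → ℝ} {Λ ε : ℝ} (hs : Convex ℝ s)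
    (hf : ∀ x ∈ s, HasDerivWithinAt f (f' x) s x) (hδ : 0 < δ) (hf' : ∀ x ∈ s, δ ≤ f' x)
    (hh' : ∀ x ∈ s, δ ≤ h' x) (hΛ : 0 ≤ Λ)
    (hlip : ∀ x ∈ s, ∀ z ∈ s, |h' z - h' x| ≤ Λ * |z - x|)
    (hε : ∀ x ∈ s, |h x - f x| ≤ ε ∧ |h' x - f' x| ≤ ε) {x z : ℝ} (hx : x ∈ s) (hz : z ∈ s)
    (hxz : h x = f z) :
    |x - z| ≤ ε / δ ∧ |(h' x)⁻¹ - (f' z)⁻¹| ≤ (1 + Λ / δ) * ε / δ ^ 2 := by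
  have hdist : |x - z| ≤ ε / δ := by
    rw [le_div_iff₀' hδ]
    calc δ * |x - z| ≤ |f x - f z| := mul_abs_sub_le_abs_image_sub hs hf hδ hf' hz hx
      _ = |h x - f x| := by rw [← hxz, abs_sub_comm]
      _ ≤ ε := (hε x hx).1
  have hslope : |h' x - f' z| ≤ (1 + Λ / δ) * ε :=
    calc |h' x - f' z| ≤ |h' x - h' z| + |h' z - f' z| := abs_sub_le _ _ _
      _ ≤ Λ * (ε / δ) + ε :=
        add_le_add ((hlip z hz x hx).trans (by gcongr)) (hε z hz).2
      _ = (1 + Λ / δ) * ε := by ring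
  exact ⟨hdist, (abs_inv_sub_inv_le hδ (hh' x hx) (hf' z hz)).trans (by gcongr)⟩

end MeanValue

section Compact

variable {E F : Type*} [NormedAddCommGroup E] [NormedSpace ℝ E] [NormedAddCommGroup F]
  [NormedSpace ℝ F]

lemma exists_lipschitzOnWith_and_bound {f : E → F} {S : Set E} (hf : ContDiff ℝ 1 f)
    (hS : IsCompact S) (hconv : Convex ℝ S) :
    ∃ K : NNReal, LipschitzOnWith K f S ∧ ∀ z ∈ S, ‖f z‖ ≤ K := by
  obtain ⟨L, hL⟩ := hf.contDiffOn.exists_lipschitzOnWith one_ne_zero hconv hS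
  obtain ⟨C, hC⟩ := hS.exists_bound_of_continuousOn hf.continuous.continuousOn
  refine ⟨max L C.toNNReal, hL.weaken (le_max_left _ _), fun z hz => (hC z hz).trans ?_⟩
  exact (Real.le_coe_toNNReal C).trans (NNReal.coe_le_coe.2 (le_max_right _ _))

end Compact

section Taylor

lemma norm_sub_sub_smul_le {E : Type*} [NormedAddCommGroup E] [NormedSpace ℝ E]
    {f f' : ℝ → E} {p q Λ : ℝ} (hpq : p ≤ q)
    (hf : ∀ t ∈ Icc p q, HasDerivWithinAt f (f' t) (Icc p q) t)
    (hΛ : ∀ t ∈ Icc p q, ‖f' t - f' p‖ ≤ Λ * (q - p)) :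
    ‖f q - f p - (q - p) • f' p‖ ≤ Λ * (q - p) ^ 2 := by
  have h := norm_image_sub_le_of_norm_deriv_le_segment'
    (f := fun t => f t - t • f' p) (f' := fun t => f' t - f' p)
    (fun t ht => by simpa using (hf t ht).fun_sub ((hasDerivWithinAt_id t _).smul_const (f' p)))
    (fun t ht => hΛ t (Ico_subset_Icc_self ht)) q (right_mem_Icc.2 hpq)
  calc ‖f q - f p - (q - p) • f' p‖ = ‖f q - q • f' p - (f p - p • f' p)‖ := by
        rw [sub_smul]; congr 1; abel
    _ ≤ Λ * (q - p) * (q - p) := h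
    _ = Λ * (q - p) ^ 2 := by ring

/-- A function on `s` that is of class `C¹` with Lipschitz derivative, with explicit bounds: the
uniform regularity of discrete solutions, whose second derivative is not continuous. -/
structure HasC11Bounds (y y' : ℝ → ℝ) (R M Λ : ℝ) (s : Set ℝ) : Prop where
  hasDeriv : ∀ x ∈ s, HasDerivWithinAt y (y' x) s x
  abs_le : ∀ x ∈ s, |y x| ≤ R
  abs_deriv_le : ∀ x ∈ s, |y' x| ≤ M
  deriv_lipschitz : ∀ x ∈ s, ∀ z ∈ s, |y' z - y' x| ≤ Λ * |z - x|

namespace HasC11Bounds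

variable {y y' : ℝ → ℝ} {R M Λ : ℝ} {s t : Set ℝ}

lemma mono (hy : HasC11Bounds y y' R M Λ s) (hts : t ⊆ s) : HasC11Bounds y y' R M Λ t where
  hasDeriv x hx := (hy.hasDeriv x (hts hx)).mono hts
  abs_le x hx := hy.abs_le x (hts hx)
  abs_deriv_le x hx := hy.abs_deriv_le x (hts hx)
  deriv_lipschitz x hx z hz := hy.deriv_lipschitz x (hts hx) z (hts hz)

lemma abs_sub_le (hy : HasC11Bounds y y' R M Λ s) (hs : Convex ℝ s) {x z : ℝ} (hx : x ∈ s)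
    (hz : z ∈ s) : |y z - y x| ≤ M * |z - x| :=
  hs.norm_image_sub_le_of_norm_hasDerivWithin_le hy.hasDeriv hy.abs_deriv_le hx hz

lemma abs_sub_sub_mul_le {p q : ℝ} (hpq : p ≤ q) (hΛ : 0 ≤ Λ)
    (hy : HasC11Bounds y y' R M Λ (Icc p q)) :
    |y q - y p - y' p * (q - p)| ≤ Λ * (q - p) ^ 2 := by
  have h := norm_sub_sub_smul_le hpq hy.hasDeriv fun t ht =>
    (hy.deriv_lipschitz p (left_mem_Icc.2 hpq) t ht).trans (by
      rw [abs_of_nonneg (sub_nonneg.2 ht.1)]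
      gcongr
      exact ht.2)
  simpa [mul_comm] using h

end HasC11Bounds

end Taylor

section PartialDerivatives

variable {f N : ℝ → ℝ → ℝ}

lemma pd1_eq_fderiv (hf : Differentiable ℝ (Function.uncurry f)) (u x : ℝ) :
    pd1 f u x = fderiv ℝ (Function.uncurry f) (u, x) (1, 0) :=
  (HasFDerivAt.comp_hasDerivAt (f := fun t : ℝ => (t, x)) u (hf _).hasFDerivAt
    ((hasDerivAt_id u).prodMk (hasDerivAt_const u x))).deriv

lemma pd2_eq_fderiv (hf : Differentiable ℝ (Function.uncurry f)) (u x : ℝ) :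
    pd2 f u x = fderiv ℝ (Function.uncurry f) (u, x) (0, 1) :=
  (HasFDerivAt.comp_hasDerivAt (f := fun t : ℝ => (u, t)) x (hf _).hasFDerivAt
    ((hasDerivAt_const x u).prodMk (hasDerivAt_id x))).deriv

lemma hasDerivWithinAt_along_graph (hf : Differentiable ℝ (Function.uncurry f)) {y : ℝ → ℝ}
    {d t : ℝ} {s : Set ℝ} (hy : HasDerivWithinAt y d s t) :
    HasDerivWithinAt (fun t => f (y t) t) (pd1 f (y t) t * d + pd2 f (y t) t) s t := by
  have hdir : ((d, 1) : ℝ × ℝ) = d • (1, 0) + (0, 1) := by simp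
  have h := HasFDerivAt.comp_hasDerivWithinAt (f := fun t => (y t, t)) t (hf _).hasFDerivAt
    (hy.prodMk (hasDerivWithinAt_id t s))
  rw [hdir, map_add, map_smul, ← pd1_eq_fderiv hf, ← pd2_eq_fderiv hf, smul_eq_mul,
    mul_comm] at h
  exact h

lemma contDiff_pd1 (hf : ContDiff ℝ 2 (Function.uncurry f)) :
    ContDiff ℝ 1 (Function.uncurry (pd1 f)) := by
  have h : Function.uncurry (pd1 f) = fun z => fderiv ℝ (Function.uncurry f) z (1, 0) :=
    funext fun z => pd1_eq_fderiv (hf.differentiable two_ne_zero) z.1 z.2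
  exact h ▸ (hf.fderiv_right one_add_one_eq_two.le).clm_apply contDiff_const

lemma contDiff_pd2 (hf : ContDiff ℝ 2 (Function.uncurry f)) :
    ContDiff ℝ 1 (Function.uncurry (pd2 f)) := by
  have h : Function.uncurry (pd2 f) = fun z => fderiv ℝ (Function.uncurry f) z (0, 1) :=
    funext fun z => pd2_eq_fderiv (hf.differentiable two_ne_zero) z.1 z.2
  exact h ▸ (hf.fderiv_right one_add_one_eq_two.le).clm_apply contDiff_const

lemma pd1_Ncal (hN : Differentiable ℝ (Function.uncurry N)) (u x : ℝ) :
    pd1 (Ncal N) u x = pd1 N u x * u + N u x := by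
  have hd : DifferentiableAt ℝ (fun t => N t x) u :=
    (hN.comp (differentiable_id.prodMk (differentiable_const x))) u
  simpa [pd1, Ncal] using (hd.hasDerivAt.fun_mul (hasDerivAt_id u)).deriv

lemma pd2_Ncal (N : ℝ → ℝ → ℝ) (u x : ℝ) : pd2 (Ncal N) u x = pd2 N u x * u := by
  simp [pd2, Ncal]

lemma contDiff_Ncal {n : WithTop ℕ∞} (hN : ContDiff ℝ n (Function.uncurry N)) :
    ContDiff ℝ n (Function.uncurry (Ncal N)) :=
  hN.mul contDiff_fst

lemma exists_bound_pd (hf : ContDiff ℝ 2 (Function.uncurry f)) (R a b : ℝ) :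
    ∃ K ≥ 0, ∀ u x, |u| ≤ R → x ∈ Icc a b →
      |f u x| ≤ K ∧ |pd1 f u x| ≤ K ∧ |pd2 f u x| ≤ K := by
  have hrect : IsCompact (Icc (-R) R ×ˢ Icc a b) := isCompact_Icc.prod isCompact_Icc
  obtain ⟨K₀, hK₀⟩ := hrect.exists_bound_of_continuousOn hf.continuous.continuousOn
  obtain ⟨K₁, hK₁⟩ := hrect.exists_bound_of_continuousOn (contDiff_pd1 hf).continuous.continuousOn
  obtain ⟨K₂, hK₂⟩ := hrect.exists_bound_of_continuousOn (contDiff_pd2 hf).continuous.continuousOn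
  refine ⟨|K₀| + |K₁| + |K₂|, by positivity, fun u x hu hx => ?_⟩
  have hmem : (u, x) ∈ Icc (-R) R ×ˢ Icc a b := ⟨abs_le.1 hu, hx⟩
  refine ⟨(hK₀ _ hmem).trans ?_, (hK₁ _ hmem).trans ?_, (hK₂ _ hmem).trans ?_⟩ <;>
    linarith [le_abs_self K₀, le_abs_self K₁, le_abs_self K₂, abs_nonneg K₀, abs_nonneg K₁,
      abs_nonneg K₂]

lemma exists_deriv_along_graph_lipschitz (hf : ContDiff ℝ 2 (Function.uncurry f)) (a b R : ℝ)
    {M Λ : ℝ} (hM : 0 ≤ M) (hΛ : 0 ≤ Λ) :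
    ∃ C ≥ 0, ∀ y y' s, HasC11Bounds y y' R M Λ s → Convex ℝ s → s ⊆ Icc a b →
      ∀ x ∈ s, ∀ z ∈ s, |pd1 f (y z) z * y' z + pd2 f (y z) z
        - (pd1 f (y x) x * y' x + pd2 f (y x) x)| ≤ C * |z - x| := by
  have hrect : IsCompact (Icc (-R) R ×ˢ Icc a b) := isCompact_Icc.prod isCompact_Icc
  have hconv : Convex ℝ (Icc (-R) R ×ˢ Icc a b) := (convex_Icc _ _).prod (convex_Icc _ _)
  obtain ⟨K₁, hlip₁, hK₁⟩ := exists_lipschitzOnWith_and_bound (contDiff_pd1 hf) hrect hconv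
  obtain ⟨K₂, hlip₂, -⟩ := exists_lipschitzOnWith_and_bound (contDiff_pd2 hf) hrect hconv
  refine ⟨K₁ * (M + 1) * M + K₁ * Λ + K₂ * (M + 1), by positivity,
    fun y y' s hy hs hsab x hx z hz => ?_⟩
  have hmem (t) (ht : t ∈ s) : (y t, t) ∈ Icc (-R) R ×ˢ Icc a b :=
    ⟨abs_le.1 (hy.abs_le t ht), hsab ht⟩
  have hgraph : dist (y z, z) (y x, x) ≤ (M + 1) * |z - x| := by
    rw [Prod.dist_eq, Real.dist_eq, Real.dist_eq]
    refine max_le ((hy.abs_sub_le hs hx hz).trans ?_) ?_ <;> nlinarith [abs_nonneg (z - x)]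
  have hpd₁ : |pd1 f (y z) z - pd1 f (y x) x| ≤ K₁ * ((M + 1) * |z - x|) :=
    (hlip₁.dist_le_mul _ (hmem z hz) _ (hmem x hx)).trans (by gcongr)
  have hpd₂ : |pd2 f (y z) z - pd2 f (y x) x| ≤ K₂ * ((M + 1) * |z - x|) :=
    (hlip₂.dist_le_mul _ (hmem z hz) _ (hmem x hx)).trans (by gcongr)
  calc _ = |(pd1 f (y z) z - pd1 f (y x) x) * y' z + pd1 f (y x) x * (y' z - y' x)
          + (pd2 f (y z) z - pd2 f (y x) x)| := by ring_nf
    _ ≤ |pd1 f (y z) z - pd1 f (y x) x| * |y' z| + |pd1 f (y x) x| * |y' z - y' x|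
          + |pd2 f (y z) z - pd2 f (y x) x| := by
        rw [← abs_mul, ← abs_mul]
        exact abs_add_three _ _ _
    _ ≤ K₁ * ((M + 1) * |z - x|) * M + K₁ * (Λ * |z - x|) + K₂ * ((M + 1) * |z - x|) := by
        gcongr
        exacts [hy.abs_deriv_le z hz, hK₁ _ (hmem x hx), hy.deriv_lipschitz x hx z hz]
    _ = _ := by ring

lemma exists_taylor_bound_along_graph (hf : ContDiff ℝ 2 (Function.uncurry f)) (a b R : ℝ)
    {M Λ : ℝ} (hM : 0 ≤ M) (hΛ : 0 ≤ Λ) :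
    ∃ C ≥ 0, ∀ y y' p q, p ≤ q → Icc p q ⊆ Icc a b → HasC11Bounds y y' R M Λ (Icc p q) →
      |f (y q) q - f (y p) p - (pd1 f (y p) p * y' p + pd2 f (y p) p) * (q - p)|
        ≤ C * (q - p) ^ 2 := by
  obtain ⟨C, hC, hlip⟩ := exists_deriv_along_graph_lipschitz hf a b R hM hΛ
  refine ⟨C, hC, fun y y' p q hpq hsub hy => ?_⟩
  have h := norm_sub_sub_smul_le hpq
    (fun t ht => hasDerivWithinAt_along_graph (hf.differentiable two_ne_zero) (hy.hasDeriv t ht))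
    fun t ht => (hlip y y' _ hy (convex_Icc p q) hsub p (left_mem_Icc.2 hpq) t ht).trans (by
      rw [abs_of_nonneg (sub_nonneg.2 ht.1)]
      gcongr
      exact ht.2)
  simpa [mul_comm] using h

end PartialDerivatives

section Shadowing

variable {E : Type*} [NormedAddCommGroup E] [NormedSpace ℝ E] {v : ℝ → E → E}
  {K : NNReal} {a b : ℝ}

lemma gronwallBound_zero_le {K ε x : ℝ} (hK : 0 ≤ K) (hε : 0 ≤ ε) :
    gronwallBound 0 K ε x ≤ x * Real.exp (K * x) * ε := by
  rcases hK.eq_or_lt with rfl | hK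
  · simp [gronwallBound_K0, mul_comm]
  · have hexp : Real.exp (K * x) - 1 ≤ K * x * Real.exp (K * x) := by
      have h := mul_le_mul_of_nonneg_right (Real.add_one_le_exp (-(K * x)))
        (Real.exp_pos (K * x)).le
      rw [← Real.exp_add, neg_add_cancel, Real.exp_zero] at h
      linarith
    calc gronwallBound 0 K ε x = ε / K * (Real.exp (K * x) - 1) := by
          simp [gronwallBound_of_K_ne_0 hK.ne']
      _ ≤ ε / K * (K * x * Real.exp (K * x)) := by gcongr
      _ = x * Real.exp (K * x) * ε := by field_simp

lemma dist_le_of_left_approx_trajectories_ODE {f f' g g' : ℝ → E} {δ εf εg : ℝ}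
    (hv : ∀ t ∈ Ioc a b, LipschitzWith K (v t))
    (hf : ContinuousOn f (Icc a b)) (hf' : ∀ t ∈ Ioc a b, HasDerivWithinAt f (f' t) (Iic t) t)
    (f_bound : ∀ t ∈ Ioc a b, dist (f' t) (v t (f t)) ≤ εf)
    (hg : ContinuousOn g (Icc a b)) (hg' : ∀ t ∈ Ioc a b, HasDerivWithinAt g (g' t) (Iic t) t)
    (g_bound : ∀ t ∈ Ioc a b, dist (g' t) (v t (g t)) ≤ εg)
    (hb : dist (f b) (g b) ≤ δ) {t : ℝ} (ht : t ∈ Icc a b) :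
    dist (f t) (g t) ≤ gronwallBound δ K (εf + εg) (b - t) := by
  have h := dist_le_of_approx_trajectories_ODE_of_mem (v := fun t z => -v (-t) z)
    (s := fun _ => univ) (f := fun t => f (-t)) (g := fun t => g (-t))
    (f' := fun t => -f' (-t)) (g' := fun t => -g' (-t)) (a := -b) (b := -a)
    (fun t ht => (hv _ (neg_mem_Ioc_iff.2 ht)).lipschitzOnWith.neg)
    (continuousOn_comp_neg hf)
    (fun t ht => hasDerivWithinAt_comp_neg_Ici (hf' _ (neg_mem_Ioc_iff.2 ht)))
    (fun t ht => by simpa using f_bound _ (neg_mem_Ioc_iff.2 ht)) (fun _ _ => mem_univ _)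
    (continuousOn_comp_neg hg)
    (fun t ht => hasDerivWithinAt_comp_neg_Ici (hg' _ (neg_mem_Ioc_iff.2 ht)))
    (fun t ht => by simpa using g_bound _ (neg_mem_Ioc_iff.2 ht)) (fun _ _ => mem_univ _)
    (by simpa using hb) (-t) (neg_mem_Icc_iff.2 (by simpa using ht))
  simpa [add_comm, sub_eq_add_neg] using h

variable [CompleteSpace E]

lemma exists_hasDerivWithinAt_Icc_of_lipschitzWith_of_bounded {C : NNReal}
    (hlip : ∀ t ∈ Icc a b, LipschitzWith K (v t))
    (hcont : ∀ z, ContinuousOn (fun t => v t z) (Icc a b))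
    (hbound : ∀ t ∈ Icc a b, ∀ z, ‖v t z‖ ≤ C) (t₀ : Icc a b) (z₀ : E) :
    ∃ z : ℝ → E, z t₀ = z₀ ∧ ∀ t ∈ Icc a b, HasDerivWithinAt z (v t (z t)) (Icc a b) t := by
  have hpl : IsPicardLindelof v t₀ z₀ (C * Real.toNNReal (b - a)) 0 C K :=
    { lipschitzOnWith := fun t ht => (hlip t ht).lipschitzOnWith
      continuousOn := fun z _ => hcont z
      norm_le := fun t ht z _ => hbound t ht z
      mul_max_le := by
        have hab : 0 ≤ b - a := by linarith [t₀.2.1, t₀.2.2]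
        simp only [NNReal.coe_mul, Real.coe_toNNReal _ hab, NNReal.coe_zero, sub_zero]
        gcongr
        exact max_le (by linarith [t₀.2.1]) (by linarith [t₀.2.2]) }
  exact hpl.exists_eq_forall_mem_Icc_hasDerivWithinAt₀

lemma exists_hasDerivWithinAt_Icc_near {S : Set E} {r : E → E} (hr : LipschitzWith 1 r)
    (hrS : ∀ z, r z ∈ S) (hr_id : ∀ z ∈ S, r z = z) (hab : a ≤ b) {C : NNReal}
    (hlip : ∀ t ∈ Icc a b, LipschitzOnWith K (v t) S)
    (hcont : ∀ z ∈ S, ContinuousOn (fun t => v t z) (Icc a b))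
    (hbound : ∀ t ∈ Icc a b, ∀ z ∈ S, ‖v t z‖ ≤ C) {f f' : ℝ → E} {ε : ℝ} (hε : 0 ≤ ε)
    (hf : ContinuousOn f (Icc a b)) (hf' : ∀ t ∈ Ioc a b, HasDerivWithinAt f (f' t) (Iic t) t)
    (f_bound : ∀ t ∈ Ioc a b, dist (f' t) (v t (f t)) ≤ ε)
    (hfS : ∀ t ∈ Icc a b,
      Metric.closedBall (f t) ((b - a) * Real.exp (K * (b - a)) * ε) ⊆ S) :
    ∃ z : ℝ → E, z b = f b ∧ ∀ t ∈ Icc a b, HasDerivWithinAt z (v t (z t)) (Icc a b) t ∧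
      dist (f t) (z t) ≤ (b - a) * Real.exp (K * (b - a)) * ε := by
  have hba : 0 ≤ b - a := sub_nonneg.2 hab
  have hrlip (t) (ht : t ∈ Icc a b) : LipschitzWith K (fun z => v t (r z)) := by
    simpa [Function.comp_def] using lipschitzOnWith_univ.1
      ((hlip t ht).comp hr.lipschitzOnWith fun z _ => hrS z)
  obtain ⟨z, hzb, hz⟩ := exists_hasDerivWithinAt_Icc_of_lipschitzWith_of_bounded hrlip
    (fun z => hcont (r z) (hrS z)) (fun t ht z => hbound t ht _ (hrS z)) ⟨b, hab, le_rfl⟩ (f b)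
  have hnear (t) (ht : t ∈ Icc a b) :
      dist (f t) (z t) ≤ (b - a) * Real.exp (K * (b - a)) * ε := by
    have hgronwall := dist_le_of_left_approx_trajectories_ODE (εg := 0) (δ := 0)
      (fun t ht => hrlip t (Ioc_subset_Icc_self ht)) hf hf'
      (fun t ht => by
        have hmem : f t ∈ S :=
          hfS t (Ioc_subset_Icc_self ht) (Metric.mem_closedBall_self (by positivity))
        simpa [hr_id _ hmem] using f_bound t ht)
      (fun t ht => (hz t ht).continuousWithinAt)
      (fun t ht => hasDerivWithinAt_Iic_of_Icc (hz t (Ioc_subset_Icc_self ht)) ht)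
      (fun t _ => (dist_self _).le) (by simp [hzb]) ht
    rw [add_zero] at hgronwall
    refine hgronwall.trans ((gronwallBound_mono le_rfl hε K.2 ?_).trans
      (gronwallBound_zero_le K.2 hε))
    linarith [ht.1]
  refine ⟨z, hzb, fun t ht => ⟨?_, hnear t ht⟩⟩
  have hmem : z t ∈ S := hfS t ht (Metric.mem_closedBall'.2 (hnear t ht))
  simpa [hr_id _ hmem] using hz t ht

end Shadowing

section SecondOrder

variable {a b : ℝ}

lemma exists_retraction_closedBall {ρ : ℝ} (hρ : 0 ≤ ρ) :
    ∃ r : ℝ × ℝ → ℝ × ℝ, LipschitzWith 1 r ∧ (∀ z, r z ∈ Metric.closedBall 0 ρ) ∧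
      ∀ z ∈ Metric.closedBall 0 ρ, r z = z := by
  have hneg : -ρ ≤ ρ := neg_le_self hρ
  have hball : Metric.closedBall (0 : ℝ × ℝ) ρ = Icc (-ρ) ρ ×ˢ Icc (-ρ) ρ := by
    rw [← Prod.mk_zero_zero, ← closedBall_prod_same, Real.closedBall_eq_Icc, zero_sub, zero_add]
  have hproj : LipschitzWith 1 fun t => (projIcc (-ρ) ρ hneg t : ℝ) :=
    LipschitzWith.projIcc hneg
  refine ⟨fun z => (projIcc (-ρ) ρ hneg z.1, projIcc (-ρ) ρ hneg z.2), ?_, fun z => ?_,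
    fun z hz => ?_⟩
  · simpa using (hproj.comp LipschitzWith.prod_fst).prodMk (hproj.comp LipschitzWith.prod_snd)
  · rw [hball]
    exact ⟨Subtype.coe_prop _, Subtype.coe_prop _⟩
  · rw [hball] at hz
    simp [projIcc_of_mem hneg hz.1, projIcc_of_mem hneg hz.2]

lemma exists_lipschitzOnWith_slice_and_bound {E : Type*} [NormedAddCommGroup E] [NormedSpace ℝ E]
    {v : ℝ → E → E} (hv : ContDiff ℝ 1 (Function.uncurry v)) {S : Set E} (hS : IsCompact S)
    (hconv : Convex ℝ S) (a b : ℝ) :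
    ∃ K : NNReal, ∀ t ∈ Icc a b, LipschitzOnWith K (v t) S ∧ ∀ z ∈ S, ‖v t z‖ ≤ K := by
  obtain ⟨K, hlip, hbound⟩ := exists_lipschitzOnWith_and_bound hv (isCompact_Icc.prod hS)
    ((convex_Icc a b).prod hconv)
  refine ⟨K, fun t ht => ⟨?_, fun z hz => hbound (t, z) ⟨ht, hz⟩⟩⟩
  simpa [Function.comp_def] using
    hlip.comp (LipschitzWith.prodMk_left t).lipschitzOnWith fun z hz => mk_mem_prod ht hz

/-- The vector field on the phase plane whose trajectories are the pairs `(y, y')` with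
`y'' = F(y, x)`. -/
def phaseField (F : ℝ → ℝ → ℝ) (x : ℝ) (z : ℝ × ℝ) : ℝ × ℝ := (z.2, F z.1 x)

lemma contDiff_phaseField {F : ℝ → ℝ → ℝ} (hF : ContDiff ℝ 1 (Function.uncurry F)) :
    ContDiff ℝ 1 (Function.uncurry (phaseField F)) :=
  (contDiff_snd.comp contDiff_snd).prodMk
    (hF.comp ((contDiff_fst.comp contDiff_snd).prodMk contDiff_fst))

/-- A `C¹` function on `[a, b]` with a one-sided second derivative, as produced by a discretization
scheme whose second derivative jumps at the knots: `y'` is the derivative of `y` and `y''` the left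
derivative of `y'`. The left derivative is used because the hypotheses on scheme pairs concern
half-open intervals that contain their right endpoint. -/
structure HasLeftSecondDeriv (y y' y'' : ℝ → ℝ) (a b : ℝ) : Prop where
  hasDeriv : ∀ x ∈ Icc a b, HasDerivWithinAt y (y' x) (Icc a b) x
  continuousOn_deriv : ContinuousOn y' (Icc a b)
  left_deriv : ∀ x ∈ Ioc a b, HasDerivWithinAt y' (y'' x) (Iic x) x

lemma isC2On_of_hasDerivWithinAt_phaseField {F : ℝ → ℝ → ℝ}
    (hF : Continuous (Function.uncurry F)) {z : ℝ → ℝ × ℝ} {s : Set ℝ}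
    (hz : ∀ x ∈ s, HasDerivWithinAt z (phaseField F x (z x)) s x) :
    IsC2On (fun x => (z x).1) (fun x => (z x).2) (fun x => F (z x).1 x) s := by
  have hcont : ContinuousOn z s := fun x hx => (hz x hx).continuousWithinAt
  exact ⟨fun x hx => (ContinuousLinearMap.fst ℝ ℝ ℝ).hasFDerivAt.comp_hasDerivWithinAt x (hz x hx),
    fun x hx => (ContinuousLinearMap.snd ℝ ℝ ℝ).hasFDerivAt.comp_hasDerivWithinAt x (hz x hx),
    hF.comp_continuousOn (hcont.fst.prodMk continuousOn_id)⟩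

lemma exists_isC2On_near {F : ℝ → ℝ → ℝ} (hF : ContDiff ℝ 1 (Function.uncurry F))
    (hab : a < b) {R : ℝ} (hR : 0 ≤ R) :
    ∃ C > 0, ∀ (y y' y'' : ℝ → ℝ) (ε : ℝ), HasLeftSecondDeriv y y' y'' a b →
      (∀ x ∈ Icc a b, |y x| ≤ R ∧ |y' x| ≤ R) →
      (∀ x ∈ Ioc a b, |y'' x - F (y x) x| ≤ ε) → C * ε ≤ 1 →
      ∃ w w' : ℝ → ℝ, IsC2On w w' (fun x => F (w x) x) (Icc a b) ∧ w b = y b ∧ w' b = y' b ∧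
        ∀ x ∈ Icc a b, |y x - w x| ≤ C * ε ∧ |y' x - w' x| ≤ C * ε := by
  obtain ⟨r, hr, hrS, hr_id⟩ := exists_retraction_closedBall (ρ := R + 1) (by positivity)
  obtain ⟨K, hK⟩ := exists_lipschitzOnWith_slice_and_bound (contDiff_phaseField hF)
    (isCompact_closedBall 0 (R + 1)) (convex_closedBall 0 (R + 1)) a b
  refine ⟨(b - a) * Real.exp (K * (b - a)),
    mul_pos (sub_pos.2 hab) (Real.exp_pos _), fun y y' y'' ε hy hR' hdefect hε => ?_⟩
  have hyR (x) (hx : x ∈ Icc a b) : ‖(y x, y' x)‖ ≤ R := norm_prod_le_iff.2 (hR' x hx)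
  obtain ⟨z, hzb, hz⟩ := exists_hasDerivWithinAt_Icc_near (v := phaseField F)
    (f := fun x => (y x, y' x)) (f' := fun x => (y' x, y'' x)) hr hrS hr_id hab.le
    (fun x hx => (hK x hx).1)
    (fun z _ => ((contDiff_phaseField hF).continuous.comp (.prodMk_left z)).continuousOn)
    (fun x hx => (hK x hx).2) ((abs_nonneg _).trans (hdefect b (right_mem_Ioc.2 hab)))
    (ContinuousOn.prodMk (fun x hx => (hy.hasDeriv x hx).continuousWithinAt) hy.continuousOn_deriv)
    (fun x hx => (hasDerivWithinAt_Iic_of_Icc (hy.hasDeriv x (Ioc_subset_Icc_self hx)) hx).prodMk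
      (hy.left_deriv x hx))
    (fun x hx => by simpa [phaseField, Prod.dist_eq, Real.dist_eq] using hdefect x hx)
    (fun x hx => Metric.closedBall_subset_closedBall'
      (by rw [dist_zero_right]; linarith [hyR x hx]))
  refine ⟨_, _, isC2On_of_hasDerivWithinAt_phaseField hF.continuous fun x hx => (hz x hx).1,
    by simp [hzb], by simp [hzb], fun x hx => ?_⟩
  simpa [Prod.dist_eq, Real.dist_eq] using (hz x hx).2

end SecondOrder

section DiscreteAcceleration

variable {N : ℝ → ℝ → ℝ} {y y' : ℝ → ℝ} {a b p x K L R M Λ m : ℝ}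

/-- The second derivative at `x` that the straight scheme with knot `p` prescribes for `y`. -/
def straightAccel (N : ℝ → ℝ → ℝ) (y y' : ℝ → ℝ) (p x : ℝ) : ℝ :=
  alphaC N p (y' p) (y p) x * y x

/-- The second derivative at `x` that the inverse scheme with knot `y p` prescribes for `y`: if
`X` is the inverse of `y`, then `X'' = -y'' / (y')³`, so `X'' = β (X')³` becomes `y'' = -β`. -/
def inverseAccel (N : ℝ → ℝ → ℝ) (y y' : ℝ → ℝ) (p x : ℝ) : ℝ :=
  -betaC N (y p) (1 / y' p) p (y x)

lemma straightAccel_le {Q : ℝ} (hN : N (y p) p ≤ K) (hN₁ : pd1 N (y p) p ≤ K)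
    (hN₂ : pd2 N (y p) p ≤ K) (hK : 0 ≤ K) (hy' : 0 ≤ y' p) (hQ : y' p ≤ Q) (hpx : p ≤ x)
    (hL : x - p ≤ L) (hyx : 0 ≤ y x) :
    straightAccel N y y' p x ≤ (K * (Q + 1) * L + K) * y x := by
  have hslope : pd1 N (y p) p * y' p + pd2 N (y p) p ≤ K * (Q + 1) :=
    calc pd1 N (y p) p * y' p + pd2 N (y p) p ≤ K * Q + K := by gcongr
      _ = K * (Q + 1) := by ring
  have hQ₀ : 0 ≤ Q := hy'.trans hQ
  refine mul_le_mul_of_nonneg_right (add_le_add ?_ hN) hyx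
  exact mul_le_mul hslope hL (sub_nonneg.2 hpx) (by positivity)

lemma inverseAccel_le (hN : ContDiff ℝ 1 (Function.uncurry N)) (hN₀ : N (y p) p ≤ K)
    (hN₁ : pd1 N (y p) p ≤ K) (hN₂ : pd2 N (y p) p ≤ K) (hK : 0 ≤ K) (hy' : 0 < y' p)
    (hL : y p ≤ L * y' p) (hyp : 0 ≤ y p) (hR : y p ≤ R) (hyx : y p ≤ y x) :
    inverseAccel N y y' p x ≤ K * (R + 1 + L) * y x := by
  have hR₀ : 0 ≤ R := hyp.trans hR
  have hL' : y p * (1 / y' p) ≤ L := by rwa [mul_one_div, div_le_iff₀ hy']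
  have hL₀ : 0 ≤ L := le_trans (by positivity) hL'
  have hcoef : pd1 N (y p) p * y p + N (y p) p + pd2 N (y p) p * (y p * (1 / y' p))
      ≤ K * (R + 1 + L) :=
    calc _ ≤ K * R + K + K * L := by gcongr
      _ = K * (R + 1 + L) := by ring
  have hval : N (y p) p * y p ≤ K * (R + 1 + L) * y p := by
    gcongr
    nlinarith
  calc inverseAccel N y y' p x
      = (pd1 N (y p) p * y p + N (y p) p + pd2 N (y p) p * (y p * (1 / y' p))) * (y x - y p)
        + N (y p) p * y p := by
        simp only [inverseAccel, betaC, pd1_Ncal (hN.differentiable one_ne_zero), pd2_Ncal, Ncal]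
        ring
    _ ≤ K * (R + 1 + L) * (y x - y p) + K * (R + 1 + L) * y p :=
        add_le_add (mul_le_mul_of_nonneg_right hcoef (sub_nonneg.2 hyx)) hval
    _ = K * (R + 1 + L) * y x := by ring

lemma exists_straightAccel_defect_le (hN : ContDiff ℝ 2 (Function.uncurry N)) (a b : ℝ)
    (hR : 0 ≤ R) (hM : 0 ≤ M) (hΛ : 0 ≤ Λ) :
    ∃ C ≥ 0, ∀ y y' p x, p ≤ x → Icc p x ⊆ Icc a b → HasC11Bounds y y' R M Λ (Icc p x) →
      |straightAccel N y y' p x - Ncal N (y x) x| ≤ C * (x - p) ^ 2 := by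
  obtain ⟨C, hC, htaylor⟩ := exists_taylor_bound_along_graph hN a b R hM hΛ
  refine ⟨C * R, by positivity, fun y y' p x hpx hsub hy => ?_⟩
  calc |straightAccel N y y' p x - Ncal N (y x) x|
      = |N (y x) x - N (y p) p - (pd1 N (y p) p * y' p + pd2 N (y p) p) * (x - p)| * |y x| := by
        rw [← abs_mul, ← abs_neg]
        simp only [straightAccel, alphaC, Ncal]
        ring_nf
    _ ≤ C * (x - p) ^ 2 * R :=
        mul_le_mul (htaylor y y' p x hpx hsub hy) (hy.abs_le x (right_mem_Icc.2 hpx))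
          (abs_nonneg _) (by positivity)
    _ = C * R * (x - p) ^ 2 := by ring

/- The inverse scheme expands `𝒩` along the chord of the graph of `y` rather than along its
tangent; the difference is the linearization error of `y`, which is also quadratic. -/
lemma exists_inverseAccel_defect_le (hN : ContDiff ℝ 2 (Function.uncurry N)) (a b R : ℝ)
    (hM : 0 ≤ M) (hΛ : 0 ≤ Λ) (hm : 0 < m) :
    ∃ C ≥ 0, ∀ y y' p x, p ≤ x → Icc p x ⊆ Icc a b → HasC11Bounds y y' R M Λ (Icc p x) →
      m ≤ y' p → |inverseAccel N y y' p x - Ncal N (y x) x| ≤ C * (x - p) ^ 2 := by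
  have hN' := contDiff_Ncal hN
  obtain ⟨C, hC, htaylor⟩ := exists_taylor_bound_along_graph hN' a b R hM hΛ
  obtain ⟨K, hK, hbound⟩ := exists_bound_pd hN' R a b
  refine ⟨C + (K + K * (1 / m)) * Λ, by positivity, fun y y' p x hpx hsub hy hmp => ?_⟩
  have hp : p ∈ Icc p x := left_mem_Icc.2 hpx
  have hy' : 0 < y' p := hm.trans_le hmp
  obtain ⟨-, hpd₁, hpd₂⟩ := hbound (y p) p (hy.abs_le p hp) (hsub hp)
  have hcoef : |pd1 (Ncal N) (y p) p + pd2 (Ncal N) (y p) p * (1 / y' p)| ≤ K + K * (1 / m) := by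
    refine (abs_add_le _ _).trans (add_le_add hpd₁ ?_)
    rw [abs_mul, abs_of_pos (one_div_pos.2 hy')]
    gcongr
  calc |inverseAccel N y y' p x - Ncal N (y x) x|
      = |-(Ncal N (y x) x - Ncal N (y p) p -
            (pd1 (Ncal N) (y p) p * y' p + pd2 (Ncal N) (y p) p) * (x - p)) +
          (pd1 (Ncal N) (y p) p + pd2 (Ncal N) (y p) p * (1 / y' p)) *
            (y x - y p - y' p * (x - p))| := by
        simp only [inverseAccel, betaC]
        congr 1
        field_simp
        ring
    _ ≤ C * (x - p) ^ 2 + (K + K * (1 / m)) * (Λ * (x - p) ^ 2) := by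
        refine (abs_add_le _ _).trans (add_le_add ?_ ?_)
        · rw [abs_neg]
          exact htaylor y y' p x hpx hsub hy
        · rw [abs_mul]
          exact mul_le_mul hcoef (hy.abs_sub_sub_mul_le hpx hΛ) (abs_nonneg _) (by positivity)
    _ = (C + (K + K * (1 / m)) * Λ) * (x - p) ^ 2 := by ring

end DiscreteAcceleration

/-- The function on `[a, b]` obtained by gluing `ũ` on `[a, c]` with the inverse of `x̃` on
`[c, b]`, for meshes of step size at most `h`: it is increasing and convex, and its second
derivative is prescribed by the straight scheme on `(a, c]` and by the inverse scheme on
`(c, b]`. -/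
structure IsGluedScheme (N : ℝ → ℝ → ℝ) (a b c ub h : ℝ) (y y' y'' : ℝ → ℝ) : Prop
    extends HasLeftSecondDeriv y y' y'' a b where
  mem_Ioo : c ∈ Ioo a b
  left_val : y a = 0
  right_val : y b = ub
  deriv_pos : ∀ x ∈ Ioc a b, 0 < y' x
  second_deriv_nonneg : ∀ x ∈ Ioc a b, 0 ≤ y'' x
  scheme : ∀ x ∈ Ioc a b, ∃ p ∈ Ico a x,
    (x ≤ c ∧ x - p ≤ h ∧ y'' x = straightAccel N y y' p x) ∨
      (c ≤ p ∧ y x - y p ≤ h ∧ y'' x = inverseAccel N y y' p x)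

namespace IsGluedScheme

variable {N : ℝ → ℝ → ℝ} {a b c ub h : ℝ} {y y' y'' : ℝ → ℝ}

lemma lt (H : IsGluedScheme N a b c ub h y y' y'') : a < b := H.mem_Ioo.1.trans H.mem_Ioo.2

lemma monotoneOn_deriv (H : IsGluedScheme N a b c ub h y y' y'') : MonotoneOn y' (Icc a b) :=
  monotoneOn_of_left_deriv_nonneg H.continuousOn_deriv H.left_deriv H.second_deriv_nonneg

lemma deriv_nonneg (H : IsGluedScheme N a b c ub h y y' y'') {x : ℝ} (hx : x ∈ Icc a b) :
    0 ≤ y' x := by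
  have hclosure : closure (Ioc a b) = Icc a b := closure_Ioc H.lt.ne
  exact le_on_closure (f := fun _ => 0) (fun z hz => (H.deriv_pos z hz).le) continuousOn_const
    (hclosure ▸ H.continuousOn_deriv) (hclosure ▸ hx)

lemma mul_sub_le_sub (H : IsGluedScheme N a b c ub h y y' y'') {x z : ℝ} (hx : x ∈ Icc a b)
    (hz : z ∈ Icc a b) (hxz : x ≤ z) : y' x * (z - x) ≤ y z - y x :=
  mul_sub_le_sub_of_monotoneOn_deriv (convex_Icc a b) H.hasDeriv H.monotoneOn_deriv hx hz hxz

lemma sub_le_mul_sub (H : IsGluedScheme N a b c ub h y y' y'') {x z : ℝ} (hx : x ∈ Icc a b)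
    (hz : z ∈ Icc a b) (hxz : x ≤ z) : y z - y x ≤ y' z * (z - x) :=
  sub_le_mul_sub_of_monotoneOn_deriv (convex_Icc a b) H.hasDeriv H.monotoneOn_deriv hx hz hxz

lemma monotoneOn (H : IsGluedScheme N a b c ub h y y' y'') : MonotoneOn y (Icc a b) :=
  fun _ hx _ hz hxz => sub_nonneg.1 <|
    (mul_nonneg (H.deriv_nonneg hx) (sub_nonneg.2 hxz)).trans (H.mul_sub_le_sub hx hz hxz)

lemma mem_Icc (H : IsGluedScheme N a b c ub h y y' y'') {x : ℝ} (hx : x ∈ Icc a b) :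
    y x ∈ Icc 0 ub := by
  rw [← H.left_val, ← H.right_val]
  exact H.monotoneOn.mapsTo_Icc hx

lemma abs_le (H : IsGluedScheme N a b c ub h y y' y'') {x : ℝ} (hx : x ∈ Icc a b) :
    |y x| ≤ ub := by
  rw [abs_of_nonneg (H.mem_Icc hx).1]
  exact (H.mem_Icc hx).2

lemma le_mul_deriv (H : IsGluedScheme N a b c ub h y y' y'') {x : ℝ} (hx : x ∈ Icc a b) :
    y x ≤ (b - a) * y' x := by
  have hy := H.sub_le_mul_sub (left_mem_Icc.2 H.lt.le) hx hx.1
  rw [H.left_val, sub_zero, mul_comm] at hy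
  exact hy.trans (mul_le_mul_of_nonneg_right (by linarith [hx.2]) (H.deriv_nonneg hx))

lemma deriv_le_div (H : IsGluedScheme N a b c ub h y y' y'') {x : ℝ} (hx : x ∈ Icc a c) :
    y' x ≤ ub / (b - c) := by
  have hxab : x ∈ Icc a b := ⟨hx.1, hx.2.trans H.mem_Ioo.2.le⟩
  rw [le_div_iff₀ (sub_pos.2 H.mem_Ioo.2)]
  calc y' x * (b - c) ≤ y' x * (b - x) := by
        have := H.deriv_nonneg hxab
        gcongr
        exact hx.2
    _ ≤ y b - y x := H.mul_sub_le_sub hxab (right_mem_Icc.2 H.lt.le) hxab.2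
    _ ≤ ub := by linarith [H.right_val, (H.mem_Icc hxab).1]

lemma step_pos (H : IsGluedScheme N a b c ub h y y' y'') : 0 < h := by
  obtain ⟨p, hp, ⟨-, hstep, -⟩ | ⟨hcp, -⟩⟩ := H.scheme c ⟨H.mem_Ioo.1, H.mem_Ioo.2.le⟩
  · exact (sub_pos.2 hp.2).trans_le hstep
  · exact absurd hcp (not_le.2 hp.2)

end IsGluedScheme

section UniformBounds

variable {N : ℝ → ℝ → ℝ} {a b c ub : ℝ}

lemma exists_second_deriv_le (hN : ContDiff ℝ 2 (Function.uncurry N)) (hab : a ≤ b) (hcb : c < b)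
    (hub : 0 ≤ ub) :
    ∃ A ≥ 0, ∀ h y y' y'', IsGluedScheme N a b c ub h y y' y'' →
      ∀ x ∈ Ioc a b, y'' x ≤ A * y x := by
  obtain ⟨K, hK, hbound⟩ := exists_bound_pd hN ub a b
  have hL : 0 ≤ b - a := sub_nonneg.2 hab
  have hQ : 0 ≤ ub / (b - c) := div_nonneg hub (sub_pos.2 hcb).le
  set A₁ := K * (ub / (b - c) + 1) * (b - a) + K
  set A₂ := K * (ub + 1 + (b - a))
  refine ⟨max A₁ A₂, by positivity, fun h y y' y'' H x hx => ?_⟩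
  obtain ⟨p, hp, hscheme⟩ := H.scheme x hx
  have hxab : x ∈ Icc a b := Ioc_subset_Icc_self hx
  have hpab : p ∈ Icc a b := ⟨hp.1, hp.2.le.trans hx.2⟩
  have hyx : 0 ≤ y x := (H.mem_Icc hxab).1
  obtain ⟨hN₀, hN₁, hN₂⟩ := hbound (y p) p (H.abs_le hpab) hpab
  rcases hscheme with ⟨hxc, -, hy''⟩ | ⟨hcp, -, hy''⟩
  · rw [hy'']
    refine (straightAccel_le (le_of_abs_le hN₀) (le_of_abs_le hN₁) (le_of_abs_le hN₂) hK
      (H.deriv_nonneg hpab) (H.deriv_le_div ⟨hp.1, hp.2.le.trans hxc⟩) hp.2.le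
      (by linarith [hp.1, hx.2] : x - p ≤ b - a) hyx).trans ?_
    gcongr
    exact le_max_left _ _
  · rw [hy'']
    refine (inverseAccel_le (hN.of_le one_le_two) (le_of_abs_le hN₀) (le_of_abs_le hN₁)
      (le_of_abs_le hN₂) hK (H.deriv_pos p ⟨H.mem_Ioo.1.trans_le hcp, hpab.2⟩)
      (H.le_mul_deriv hpab) (H.mem_Icc hpab).1 (H.mem_Icc hpab).2
      (H.monotoneOn hpab hxab hp.2.le)).trans ?_
    gcongr
    exact le_max_right _ _

/- Since `y'' ≤ A y ≤ A (b - a) y'`, Grönwall's inequality compares any two slopes, while the mean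
slope is `ub / (b - a)`. -/
lemma exists_slope_bounds (hN : ContDiff ℝ 2 (Function.uncurry N)) (hab : a < b) (hcb : c < b)
    (hub : 0 < ub) :
    ∃ m M Λ : ℝ, 0 < m ∧ 0 ≤ M ∧ 0 ≤ Λ ∧ ∀ h y y' y'', IsGluedScheme N a b c ub h y y' y'' →
      HasC11Bounds y y' ub M Λ (Icc a b) ∧ ∀ x ∈ Icc a b, m ≤ y' x := by
  obtain ⟨A, hA, hAy⟩ := exists_second_deriv_le hN hab.le hcb hub.le
  have hL : 0 < b - a := sub_pos.2 hab
  have ha : a ∈ Icc a b := left_mem_Icc.2 hab.le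
  have hb : b ∈ Icc a b := right_mem_Icc.2 hab.le
  set G := Real.exp (A * (b - a) * (b - a))
  have hG : 0 < G := Real.exp_pos _
  refine ⟨ub / (b - a) / G, ub / (b - a) * G, A * ub, by positivity, by positivity, by positivity,
    fun h y y' y'' H => ?_⟩
  have hgronwall : y' b ≤ y' a * G :=
    le_mul_exp_of_left_deriv_le H.continuousOn_deriv H.left_deriv
      (fun x hx => (hAy h y y' y'' H x hx).trans (by
        rw [mul_assoc]
        exact mul_le_mul_of_nonneg_left (H.le_mul_deriv (Ioc_subset_Icc_self hx)) hA)) ha hb hab.le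
  have hmean_le : ub / (b - a) ≤ y' b := by
    rw [div_le_iff₀' hL]
    simpa [H.right_val] using H.le_mul_deriv hb
  have hle_mean : y' a ≤ ub / (b - a) := by
    rw [le_div_iff₀ hL]
    simpa [H.left_val, H.right_val] using H.mul_sub_le_sub ha hb hab.le
  have hlip (x) (hx : x ∈ Icc a b) (z) (hz : z ∈ Icc a b) (hxz : x ≤ z) :
      |y' z - y' x| ≤ A * ub * |z - x| := by
    rw [abs_of_nonneg (sub_nonneg.2 (H.monotoneOn_deriv hx hz hxz)),
      abs_of_nonneg (sub_nonneg.2 hxz)]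
    exact sub_le_mul_of_left_deriv_le H.continuousOn_deriv H.left_deriv (fun t ht =>
      (hAy h y y' y'' H t ht).trans (by
        gcongr
        exact (H.mem_Icc (Ioc_subset_Icc_self ht)).2)) hx hz hxz
  refine ⟨⟨H.hasDeriv, fun x hx => H.abs_le hx, fun x hx => ?_, fun x hx z hz => ?_⟩,
    fun x hx => ?_⟩
  · rw [abs_of_nonneg (H.deriv_nonneg hx)]
    calc y' x ≤ y' a * G := (H.monotoneOn_deriv hx hb hx.2).trans hgronwall
      _ ≤ ub / (b - a) * G := by gcongr
  · rcases le_total x z with hxz | hzx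
    · exact hlip x hx z hz hxz
    · rw [abs_sub_comm, abs_sub_comm z]
      exact hlip z hz x hx hzx
  · calc ub / (b - a) / G ≤ y' a := (div_le_iff₀ hG).2 (hmean_le.trans hgronwall)
      _ ≤ y' x := H.monotoneOn_deriv ha hx hx.1

lemma exists_defect_bound (hN : ContDiff ℝ 2 (Function.uncurry N)) {m M Λ : ℝ} (hub : 0 ≤ ub)
    (hm : 0 < m) (hM : 0 ≤ M) (hΛ : 0 ≤ Λ) :
    ∃ C ≥ 0, ∀ h y y' y'', IsGluedScheme N a b c ub h y y' y'' →
      HasC11Bounds y y' ub M Λ (Icc a b) → (∀ x ∈ Icc a b, m ≤ y' x) →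
      ∀ x ∈ Ioc a b, |y'' x - Ncal N (y x) x| ≤ C * h ^ 2 := by
  obtain ⟨C₁, hC₁, hstraight⟩ := exists_straightAccel_defect_le hN a b hub hM hΛ
  obtain ⟨C₂, hC₂, hinverse⟩ := exists_inverseAccel_defect_le hN a b ub hM hΛ hm
  refine ⟨max C₁ (C₂ / m ^ 2), by positivity, fun h y y' y'' H hy hy' x hx => ?_⟩
  obtain ⟨p, hp, hscheme⟩ := H.scheme x hx
  have hsub : Icc p x ⊆ Icc a b := Icc_subset_Icc hp.1 hx.2
  have hpx : p ∈ Icc p x := left_mem_Icc.2 hp.2.le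
  have hxp : 0 ≤ x - p := sub_nonneg.2 hp.2.le
  rcases hscheme with ⟨-, hstep, hy''⟩ | ⟨-, hstep, hy''⟩
  · rw [hy'']
    calc _ ≤ C₁ * (x - p) ^ 2 := hstraight y y' p x hp.2.le hsub (hy.mono hsub)
      _ ≤ max C₁ (C₂ / m ^ 2) * h ^ 2 := by gcongr; exact le_max_left _ _
  · rw [hy'']
    have hstep' : x - p ≤ h / m := by
      rw [le_div_iff₀' hm]
      calc m * (x - p) ≤ y' p * (x - p) := by gcongr; exact hy' p (hsub hpx)
        _ ≤ y x - y p := H.mul_sub_le_sub (hsub hpx) (Ioc_subset_Icc_self hx) hp.2.le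
        _ ≤ h := hstep
    calc _ ≤ C₂ * (x - p) ^ 2 :=
          hinverse y y' p x hp.2.le hsub (hy.mono hsub) (hy' p (hsub hpx))
      _ ≤ C₂ * (h / m) ^ 2 := by gcongr
      _ = C₂ / m ^ 2 * h ^ 2 := by ring
      _ ≤ max C₁ (C₂ / m ^ 2) * h ^ 2 := by gcongr; exact le_max_right _ _

lemma exists_mul_sq_le {κ θ : ℝ} (hκ : 0 < κ) (hθ : 0 < θ) :
    ∃ h₀ > 0, ∀ h, 0 ≤ h → h ≤ h₀ → κ * h ^ 2 ≤ θ := by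
  refine ⟨√(θ / κ), by positivity, fun h hh hle => ?_⟩
  rw [← le_div_iff₀' hκ]
  exact (Real.le_sqrt hh (by positivity)).1 hle

lemma exists_shooting_solution_near (hN : ContDiff ℝ 2 (Function.uncurry N)) (hc : c ∈ Ioo a b)
    (hub : 0 < ub) :
    ∃ m Λ κ h₀ : ℝ, 0 < m ∧ 0 ≤ Λ ∧ 0 < κ ∧ 0 < h₀ ∧ ∀ h ≤ h₀, ∀ y y' y'',
      IsGluedScheme N a b c ub h y y' y'' →
      (∀ x ∈ Icc a b, m ≤ y' x) ∧ (∀ x ∈ Icc a b, ∀ z ∈ Icc a b, |y' z - y' x| ≤ Λ * |z - x|) ∧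
      ∃ w w' : ℝ → ℝ, IsC2On w w' (fun x => Ncal N (w x) x) (Icc a b) ∧ w b = ub ∧ w' b = y' b ∧
        w a ≤ y c ∧ (∀ x ∈ Icc a b, m ≤ w' x) ∧
        ∀ x ∈ Icc a b, |y x - w x| ≤ κ * h ^ 2 ∧ |y' x - w' x| ≤ κ * h ^ 2 := by
  have hab : a < b := hc.1.trans hc.2
  have hca : 0 < c - a := sub_pos.2 hc.1
  obtain ⟨δ, M, Λ, hδ, hM, hΛ, hslope⟩ := exists_slope_bounds (c := c) hN hab hc.2 hub
  obtain ⟨D, hD, hdefect⟩ := exists_defect_bound (a := a) (b := b) (c := c) hN hub.le hδ hM hΛ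
  obtain ⟨C, hC, hshadow⟩ := exists_isC2On_near ((contDiff_Ncal hN).of_le one_le_two) hab
    (R := max ub M) (le_max_of_le_left hub.le)
  obtain ⟨h₀, hh₀, hsmall⟩ := exists_mul_sq_le (κ := C * (D + 1)) (by positivity)
    (θ := min 1 (min (δ / 2) (δ * (c - a)))) (by positivity)
  refine ⟨δ / 2, Λ, C * (D + 1), h₀, half_pos hδ, hΛ, by positivity, hh₀,
    fun h hh y y' y'' H => ?_⟩
  obtain ⟨hy, hy'⟩ := hslope h y y' y'' H
  obtain ⟨hsmall₁, hsmall₂, hsmall₃⟩ : C * (D + 1) * h ^ 2 ≤ 1 ∧ C * (D + 1) * h ^ 2 ≤ δ / 2 ∧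
      C * (D + 1) * h ^ 2 ≤ δ * (c - a) := by simpa using hsmall h H.step_pos.le hh
  have hε : C * ((D + 1) * h ^ 2) = C * (D + 1) * h ^ 2 := by ring
  obtain ⟨w, w', hw, hwb, hwb', hnear⟩ := hshadow y y' y'' ((D + 1) * h ^ 2)
    H.toHasLeftSecondDeriv
    (fun x hx => ⟨(hy.abs_le x hx).trans (le_max_left _ _),
      (hy.abs_deriv_le x hx).trans (le_max_right _ _)⟩)
    (fun x hx => (hdefect h y y' y'' H hy hy' x hx).trans (by gcongr; linarith))
    (hε ▸ hsmall₁)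
  rw [hε] at hnear
  refine ⟨fun x hx => by linarith [hy' x hx], hy.deriv_lipschitz, w, w', hw,
    hwb.trans H.right_val, hwb', ?_, fun x hx => ?_, hnear⟩
  · have ha : a ∈ Icc a b := left_mem_Icc.2 hab.le
    have hyc := H.mul_sub_le_sub ha (Ioo_subset_Icc_self hc) hc.1.le
    have hya := (hnear a ha).1
    rw [H.left_val] at hyc hya
    linarith [neg_le_of_abs_le hya, mul_le_mul_of_nonneg_right (hy' a ha) hca.le]
  · linarith [hy' x hx, le_of_abs_le (hnear x hx).2]

end UniformBounds

section Gluing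

variable {f f' f'' g g' g'' : ℝ → ℝ} {a b c : ℝ}

lemma piecewise_Iic_eqOn_Ici (h : f c = g c) : EqOn ((Iic c).piecewise f g) g (Ici c) := by
  intro x hx
  rcases (mem_Ici.1 hx).eq_or_lt with rfl | hcx
  · rw [piecewise_eq_of_mem (Iic c) _ _ self_mem_Iic, h]
  · exact piecewise_eq_of_notMem _ _ _ (notMem_Iic.2 hcx)

lemma hasDerivWithinAt_Icc_of_glue (hac : a ≤ c) (hcb : c ≤ b)
    (h₁ : ∀ x ∈ Icc a c, HasDerivWithinAt f (f' x) (Icc a c) x)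
    (h₂ : ∀ x ∈ Icc c b, HasDerivWithinAt f (f' x) (Icc c b) x) :
    ∀ x ∈ Icc a b, HasDerivWithinAt f (f' x) (Icc a b) x := by
  have hglobal {p q x : ℝ} (h : ∀ x ∈ Icc p q, HasDerivWithinAt f (f' x) (Icc p q) x) :
      HasDerivWithinAt f (f' x) (Icc p q) x := by
    by_cases hx : x ∈ Icc p q
    · exact h x hx
    · exact hasDerivWithinAt_iff_hasFDerivWithinAt.2
        (.of_notMem_closure (by rwa [isClosed_Icc.closure_eq]))
  intro x _
  rw [← Icc_union_Icc_eq_Icc hac hcb]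
  exact (hglobal h₁).union (hglobal h₂)

lemma HasLeftSecondDeriv.piecewise (h₁ : HasLeftSecondDeriv f f' f'' a c)
    (h₂ : HasLeftSecondDeriv g g' g'' c b) (hac : a ≤ c) (hcb : c ≤ b) (h : f c = g c)
    (h' : f' c = g' c) :
    HasLeftSecondDeriv ((Iic c).piecewise f g) ((Iic c).piecewise f' g')
      ((Iic c).piecewise f'' g'') a b where
  hasDeriv := by
    refine hasDerivWithinAt_Icc_of_glue hac hcb (fun x hx => ?_) (fun x hx => ?_)
    · rw [piecewise_eq_of_mem (Iic c) _ _ hx.2]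
      exact (h₁.hasDeriv x hx).congr_of_mem (fun z hz => piecewise_eqOn _ _ _ hz.2) hx
    · rw [piecewise_Iic_eqOn_Ici h' hx.1]
      exact (h₂.hasDeriv x hx).congr_of_mem (fun z hz => piecewise_Iic_eqOn_Ici h hz.1) hx
  continuousOn_deriv := by
    rw [← Icc_union_Icc_eq_Icc hac hcb]
    exact (h₁.continuousOn_deriv.congr fun x hx => piecewise_eqOn _ _ _ hx.2).union_of_isClosed
      (h₂.continuousOn_deriv.congr fun x hx => piecewise_Iic_eqOn_Ici h' hx.1)
      isClosed_Icc isClosed_Icc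
  left_deriv := by
    intro x hx
    rcases le_or_gt x c with hxc | hcx
    · rw [piecewise_eq_of_mem (Iic c) _ _ hxc]
      exact (h₁.left_deriv x ⟨hx.1, hxc⟩).congr_of_mem
        (fun z hz => piecewise_eqOn _ _ _ (le_trans hz hxc)) self_mem_Iic
    · rw [piecewise_eq_of_notMem _ _ _ (notMem_Iic.2 hcx)]
      refine (h₂.left_deriv x ⟨hcx, hx.2⟩).congr_of_eventuallyEq_of_mem ?_ self_mem_Iic
      filter_upwards [mem_nhdsWithin_of_mem_nhds (Ioi_mem_nhds hcx)] with z hz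
      exact piecewise_eq_of_notMem _ _ _ (notMem_Iic.2 hz)

lemma hasDerivWithinAt_inv_comp_inverse {X' Y : ℝ → ℝ} {s t : Set ℝ} {x β : ℝ}
    (hX' : HasDerivWithinAt X' (β * X' (Y x) ^ 3) t (Y x))
    (hY : HasDerivWithinAt Y (X' (Y x))⁻¹ s x) (hst : MapsTo Y s t) (hne : X' (Y x) ≠ 0) :
    HasDerivWithinAt (fun z => (X' (Y z))⁻¹) (-β) s x := by
  have hβ : -(β * X' (Y x) ^ 3 * (X' (Y x))⁻¹) / X' (Y x) ^ 2 = -β := by field_simp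
  exact ((hX'.comp x hY hst).fun_inv hne).congr_deriv hβ

end Gluing

section Mesh

lemma exists_knot_interval (k : ℕ → ℝ) {n : ℕ} {x : ℝ} (h0 : k 0 < x) (hn : x ≤ k n) :
    ∃ i < n, x ∈ Ioc (k i) (k (i + 1)) := by
  induction n with
  | zero => exact absurd hn (not_le.2 h0)
  | succ n ih =>
    rcases le_or_gt x (k n) with h | h
    · obtain ⟨i, hi, hx⟩ := ih h
      exact ⟨i, hi.trans n.lt_succ_self, hx⟩
    · exact ⟨n, n.lt_succ_self, h, hn⟩

lemma Mesh.pt_zero_le (m : Mesh) {i : ℕ} (hi : i ≤ m.n) : m.pt 0 ≤ m.pt i := by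
  induction i with
  | zero => exact le_rfl
  | succ i ih => exact (ih (Nat.le_of_succ_le hi)).trans (m.mono i hi).le

end Mesh

namespace GoodPair

variable {N : ℝ → ℝ → ℝ} {a b c ub h : ℝ} {ms mi : Mesh} {u u' X X' : ℝ → ℝ}

lemma lt_right (hG : GoodPair N a b c ub ms mi u u' X X') : u c < ub := hG.1.2.2.2.1

lemma continuousOn_inverse_deriv (hG : GoodPair N a b c ub ms mi u u' X X') :
    ContinuousOn X' (Icc (u c) ub) := hG.1.2.2.2.2.2.1.2.1

lemma inverse_right (hG : GoodPair N a b c ub ms mi u u' X X') : X ub = b := hG.1.2.2.2.2.2.2.1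

lemma inverse_left (hG : GoodPair N a b c ub ms mi u u' X X') : X (u c) = c :=
  hG.1.2.2.2.2.2.2.2.1

lemma exists_straight_second_deriv (hG : GoodPair N a b c ub ms mi u u' X X')
    (hms0 : ms.pt 0 = a) (hmsn : ms.pt ms.n = c) (hstep : ∀ i < ms.n, ms.pt (i + 1) - ms.pt i ≤ h) :
    ∃ u'' : ℝ → ℝ, HasLeftSecondDeriv u u' u'' a c ∧ ∀ x ∈ Ioc a c, 0 ≤ u'' x ∧
      ∃ p ∈ Ico a x, x - p ≤ h ∧ u'' x = straightAccel N u u' p x := by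
  obtain ⟨⟨⟨hu, hu'c, hu''⟩, -⟩, -, hconv, -⟩ := hG
  have hscheme : ∀ x ∈ Ioc a c, ∃ d, HasDerivWithinAt u' d (Iic x) x ∧ 0 ≤ d ∧
      ∃ p ∈ Ico a x, x - p ≤ h ∧ d = straightAccel N u u' p x := by
    intro x hx
    obtain ⟨i, hi, hxi⟩ := exists_knot_interval ms.pt (hms0 ▸ hx.1) (hmsn ▸ hx.2)
    have hxI := Ioc_subset_Icc_self hxi
    exact ⟨_, hasDerivWithinAt_Iic_of_Icc (hu'' i hi x hxI) hxi, hconv i hi x hxI hx, ms.pt i,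
      ⟨hms0 ▸ ms.pt_zero_le hi.le, hxi.1⟩, (sub_le_sub_right hxi.2 _).trans (hstep i hi), rfl⟩
  choose! u'' hderiv hprop using hscheme
  exact ⟨u'', ⟨hu, hu'c, hderiv⟩, hprop⟩

lemma inverse_deriv_pos (hG : GoodPair N a b c ub ms mi u u' X X') (hac : a < c) {v : ℝ}
    (hv : v ∈ Icc (u c) ub) : 0 < X' v := by
  obtain ⟨⟨-, -, -, -, -, -, -, -, hX'c⟩, hu, -, hX, -⟩ := hG
  rcases hv.1.eq_or_lt with rfl | hlt
  · rw [hX'c]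
    exact one_div_pos.2 (hu c ⟨hac, le_rfl⟩).2.2
  · exact (hX v ⟨hlt, hv.2⟩).2

lemma exists_inverse_function (hG : GoodPair N a b c ub ms mi u u' X X') (hac : a < c) :
    ∃ Y : ℝ → ℝ, InvOn Y X (Icc (u c) ub) (Icc c b) ∧ MapsTo X (Icc (u c) ub) (Icc c b) ∧
      MapsTo Y (Icc c b) (Icc (u c) ub) ∧ MonotoneOn Y (Icc c b) ∧
      ∀ x ∈ Icc c b, HasDerivWithinAt Y (X' (Y x))⁻¹ (Icc c b) x := by
  have hpos (v) (hv : v ∈ Icc (u c) ub) : 0 < X' v := hG.inverse_deriv_pos hac hv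
  have hX := hG.1.2.2.2.2.2.1.1
  obtain ⟨v₀, hv₀, hmin⟩ := isCompact_Icc.exists_isMinOn (nonempty_Icc.2 hG.lt_right.le)
    hG.continuousOn_inverse_deriv
  have hmaps : MapsTo X (Icc (u c) ub) (Icc (X (u c)) (X ub)) :=
    (strictMonoOn_of_le_deriv (convex_Icc _ _) hX (hpos v₀ hv₀) hmin).monotoneOn.mapsTo_Icc
  obtain ⟨Y, hinv, hY⟩ := exists_inverse_Icc hG.lt_right.le hX (hpos v₀ hv₀) hmin
  rw [hG.inverse_left, hG.inverse_right] at hinv hY hmaps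
  exact ⟨Y, hinv, hmaps, hY⟩

lemma exists_inverse_step (hG : GoodPair N a b c ub ms mi u u' X X') (hac : a < c)
    (hmi0 : mi.pt 0 = 0) (hmin : mi.pt mi.n = ub)
    (hstep : ∀ i < mi.n, ubar mi (u c) (i + 1) - ubar mi (u c) i ≤ h) {v : ℝ}
    (hv : v ∈ Ioc (u c) ub) :
    ∃ k ∈ Ico (u c) v, v - k ≤ h ∧ betaC N k (X' k) (X k) v ≤ 0 ∧
      HasDerivWithinAt X' (betaC N k (X' k) (X k) v * X' v ^ 3) (Icc k v) v := by
  have hpos : 0 < X' v := hG.inverse_deriv_pos hac (Ioc_subset_Icc_self hv)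
  obtain ⟨⟨-, -, huc, hlt, -, ⟨-, -, hX''⟩, -⟩, -, -, -, hconc⟩ := hG
  have hk0 : ubar mi (u c) 0 = u c := by rw [ubar, hmi0, max_eq_right huc.le]
  have hkn : ubar mi (u c) mi.n = ub := by rw [ubar, hmin, max_eq_left hlt.le]
  obtain ⟨i, hi, hvi⟩ := exists_knot_interval (ubar mi (u c)) (hk0.trans_lt hv.1)
    (hv.2.trans_eq hkn.symm)
  have hvI := Ioc_subset_Icc_self hvi
  exact ⟨_, ⟨le_max_right _ _, hvi.1⟩, (sub_le_sub_right hvi.2 _).trans (hstep i hi),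
    nonpos_of_mul_nonpos_left (hconc i hi v hvI hv) (by positivity),
    (hX'' i hi v hvI).mono (Icc_subset_Icc_right hvi.2)⟩

lemma exists_inverse_half (hG : GoodPair N a b c ub ms mi u u' X X') (hac : a < c)
    (hmi0 : mi.pt 0 = 0) (hmin : mi.pt mi.n = ub)
    (hstep : ∀ i < mi.n, ubar mi (u c) (i + 1) - ubar mi (u c) i ≤ h) :
    ∃ Y Y' Y'' : ℝ → ℝ, HasLeftSecondDeriv Y Y' Y'' c b ∧
      (∀ v ∈ Icc (u c) ub, X v ∈ Icc c b ∧ Y (X v) = v ∧ Y' (X v) = (X' v)⁻¹) ∧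
      ∀ x ∈ Ioc c b, 0 < Y' x ∧ 0 ≤ Y'' x ∧
        ∃ p ∈ Ico c x, Y x - Y p ≤ h ∧ Y'' x = inverseAccel N Y Y' p x := by
  obtain ⟨Y, ⟨hYX, hXY⟩, hXmaps, hYmaps, hYmono, hY⟩ := hG.exists_inverse_function hac
  have hpos {x} (hx : x ∈ Icc c b) : 0 < X' (Y x) := hG.inverse_deriv_pos hac (hYmaps hx)
  have hscheme : ∀ x ∈ Ioc c b, ∃ d, HasDerivWithinAt (fun z => (X' (Y z))⁻¹) d (Iic x) x ∧
      0 ≤ d ∧ ∃ p ∈ Ico c x, Y x - Y p ≤ h ∧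
        d = inverseAccel N Y (fun z => (X' (Y z))⁻¹) p x := by
    intro x hx
    have hxI := Ioc_subset_Icc_self hx
    have hv : Y x ∈ Ioc (u c) ub := by
      refine ⟨(hYmaps hxI).1.lt_of_ne fun heq => hx.1.ne ?_, (hYmaps hxI).2⟩
      rw [← hXY hxI, ← heq, hG.inverse_left]
    obtain ⟨k, hk, hkh, hβ, hX''⟩ := hG.exists_inverse_step hac hmi0 hmin hstep hv
    have hkI : k ∈ Icc (u c) ub := ⟨hk.1, hk.2.le.trans hv.2⟩
    have hpI : X k ∈ Icc c b := hXmaps hkI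
    have hYp : Y (X k) = k := hYX hkI
    have hpx : X k < x := hYmono.reflect_lt hpI hxI (hYp.trans_lt hk.2)
    have hsub : Icc (X k) x ⊆ Icc c b := Icc_subset_Icc hpI.1 hx.2
    have hmaps : MapsTo Y (Icc (X k) x) (Icc k (Y x)) := by
      simpa only [hYp] using (hYmono.mono hsub).mapsTo_Icc
    refine ⟨-betaC N k (X' k) (X k) (Y x), hasDerivWithinAt_Iic_of_Icc
      (hasDerivWithinAt_inv_comp_inverse hX'' ((hY x hxI).mono hsub) hmaps (hpos hxI).ne')
      ⟨hpx, le_rfl⟩, neg_nonneg.2 hβ, X k, ⟨hpI.1, hpx⟩, hYp.symm ▸ hkh, ?_⟩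
    rw [inverseAccel, hYp, one_div, inv_inv]
  choose! Y'' hderiv hprop using hscheme
  refine ⟨Y, fun x => (X' (Y x))⁻¹, Y'', ⟨hY, ?_, hderiv⟩,
    fun v hv => ⟨hXmaps hv, hYX hv, by simp only [hYX hv]⟩,
    fun x hx => ⟨inv_pos.2 (hpos (Ioc_subset_Icc_self hx)), hprop x hx⟩⟩
  exact (hG.continuousOn_inverse_deriv.comp (fun x hx => (hY x hx).continuousWithinAt) hYmaps).inv₀
    fun x hx => (hpos hx).ne'

lemma exists_isGluedScheme (hG : GoodPair N a b c ub ms mi u u' X X') (hc : c ∈ Ioo a b)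
    (hms0 : ms.pt 0 = a) (hmsn : ms.pt ms.n = c) (hmi0 : mi.pt 0 = 0) (hmin : mi.pt mi.n = ub)
    (hstep : StepLe ms mi (u c) h) :
    ∃ y y' y'' : ℝ → ℝ, IsGluedScheme N a b c ub h y y' y'' ∧
      (∀ x ∈ Icc a c, y x = u x ∧ y' x = u' x) ∧
      ∀ v ∈ Icc (u c) ub, X v ∈ Icc a b ∧ y (X v) = v ∧ y' (X v) = (X' v)⁻¹ := by
  obtain ⟨u'', hu, hstraight⟩ := hG.exists_straight_second_deriv hms0 hmsn hstep.1
  obtain ⟨Y, Y', Y'', hY, hYX, hinverse⟩ := hG.exists_inverse_half hc.1 hmi0 hmin hstep.2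
  have hX'c : X' (u c) = 1 / u' c := hG.1.2.2.2.2.2.2.2.2
  obtain ⟨-, hYc, hYc'⟩ := hYX _ (left_mem_Icc.2 hG.lt_right.le)
  rw [hG.inverse_left] at hYc hYc'
  rw [hX'c, one_div, inv_inv] at hYc'
  have hglue := hu.piecewise hY hc.1.le hc.2.le hYc.symm hYc'.symm
  set y := (Iic c).piecewise u Y
  set y' := (Iic c).piecewise u' Y'
  have hyu : EqOn y u (Iic c) := piecewise_eqOn _ _ _
  have hyu' : EqOn y' u' (Iic c) := piecewise_eqOn _ _ _
  have hyY : EqOn y Y (Ici c) := piecewise_Iic_eqOn_Ici hYc.symm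
  have hyY' : EqOn y' Y' (Ici c) := piecewise_Iic_eqOn_Ici hYc'.symm
  have hpointwise : ∀ x ∈ Ioc a b, 0 < y' x ∧ 0 ≤ (Iic c).piecewise u'' Y'' x ∧
      ∃ p ∈ Ico a x, (x ≤ c ∧ x - p ≤ h ∧ (Iic c).piecewise u'' Y'' x = straightAccel N y y' p x) ∨
        (c ≤ p ∧ y x - y p ≤ h ∧ (Iic c).piecewise u'' Y'' x = inverseAccel N y y' p x) := by
    intro x hx
    rcases le_or_gt x c with hxc | hcx
    · obtain ⟨hnonneg, p, hp, hxp, heq⟩ := hstraight x ⟨hx.1, hxc⟩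
      have hpc : p ≤ c := hp.2.le.trans hxc
      rw [piecewise_eq_of_mem (Iic c) _ _ hxc, hyu' hxc]
      refine ⟨(hG.2.1 x ⟨hx.1, hxc⟩).2.2, hnonneg, p, hp, .inl ⟨hxc, hxp, heq.trans ?_⟩⟩
      simp only [straightAccel, hyu hpc, hyu' hpc, hyu hxc]
    · obtain ⟨hpos, hnonneg, p, hp, hxp, heq⟩ := hinverse x ⟨hcx, hx.2⟩
      rw [piecewise_eq_of_notMem _ _ _ (notMem_Iic.2 hcx), hyY' hcx.le, hyY hcx.le]
      refine ⟨hpos, hnonneg, p, ⟨hc.1.le.trans hp.1, hp.2⟩,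
        .inr ⟨hp.1, (hyY hp.1).symm ▸ hxp, heq.trans ?_⟩⟩
      simp only [inverseAccel, hyY hp.1, hyY' hp.1, hyY hcx.le]
  refine ⟨y, y', (Iic c).piecewise u'' Y'', ⟨hglue, hc, ?_, ?_, fun x hx => (hpointwise x hx).1,
    fun x hx => (hpointwise x hx).2.1, fun x hx => (hpointwise x hx).2.2⟩,
    fun x hx => ⟨hyu hx.2, hyu' hx.2⟩, fun v hv => ?_⟩
  · rw [hyu hc.1.le, hG.1.2.1]
  · rw [hyY hc.2.le, ← hG.inverse_right, (hYX ub (right_mem_Icc.2 hG.lt_right.le)).2.1]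
  · obtain ⟨hXv, hYXv, hYXv'⟩ := hYX v hv
    exact ⟨⟨hc.1.le.trans hXv.1, hXv.2⟩, (hyY hXv.1).trans hYXv, (hyY' hXv.1).trans hYXv'⟩

end GoodPair

theorem scheme_approximates_shooting_straight_solution_general
    (a b c ub : ℝ) (hub : 0 < ub) (hc : c ∈ Ioo a b)
    (N : ℝ → ℝ → ℝ) (hN : ContDiff ℝ 2 (Function.uncurry N)) :
    ∃ κ₃ κ₄ h₀ : ℝ, 0 < κ₃ ∧ 0 < κ₄ ∧ 0 < h₀ ∧
      ∀ ms mi : Mesh,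
        ms.pt 0 = a → ms.pt ms.n = c → mi.pt 0 = 0 → mi.pt mi.n = ub →
        ∀ u u' X X' : ℝ → ℝ, GoodPair N a b c ub ms mi u u' X X' →
        ∀ h : ℝ, h ≤ h₀ → StepLe ms mi (u c) h →
        ∃ uc uc' uc'' : ℝ → ℝ,
          IsC2On uc uc' uc'' (Icc a b) ∧
          (∀ x ∈ Icc a b, uc'' x = Ncal N (uc x) x) ∧
          uc b = ub ∧ uc' b = 1 / X' ub ∧
          StrictMonoOn uc (Icc a b) ∧
          Icc (u c) ub ⊆ uc '' Icc a b ∧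
          ∃ xc xc' : ℝ → ℝ,
            (∀ x ∈ Icc a b, xc (uc x) = x) ∧
            (∀ v ∈ Icc (u c) ub, HasDerivWithinAt xc (xc' v) (Icc (u c) ub) v) ∧
            (∀ x ∈ Icc a c,
              |u x - uc x| ≤ κ₃ * h ^ 2 ∧ |u' x - uc' x| ≤ κ₃ * h ^ 2) ∧
            (∀ v ∈ Icc (u c) ub,
              |X v - xc v| ≤ κ₄ * h ^ 2 ∧ |X' v - xc' v| ≤ κ₄ * h ^ 2) := by
  obtain ⟨m, Λ, κ, h₀, hm, hΛ, hκ, hh₀, hshoot⟩ := exists_shooting_solution_near hN hc hub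
  refine ⟨κ, max (κ / m) ((1 + Λ / m) * κ / m ^ 2), h₀, hκ, by positivity, hh₀, ?_⟩
  intro ms mi hms0 hmsn hmi0 hmin u u' X X' hG h hh hstep
  obtain ⟨y, y', y'', H, hyu, hyX⟩ := hG.exists_isGluedScheme hc hms0 hmsn hmi0 hmin hstep
  obtain ⟨hy', hlip, w, w', hw, hwb, hwb', hwa, hw', hnear⟩ := hshoot h hh y y' y'' H
  obtain ⟨g, ⟨hgw, hwg⟩, hgmaps, -, hg⟩ := exists_inverse_Icc H.lt.le hw.1 hm hw'
  have hXub : X' ub = (y' b)⁻¹ := by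
    obtain ⟨-, -, hyX'⟩ := hyX ub (right_mem_Icc.2 hG.lt_right.le)
    rw [← hG.inverse_right, hyX', inv_inv]
  have hrange : Icc (u c) ub ⊆ Icc (w a) (w b) :=
    Icc_subset_Icc (hwa.trans_eq (hyu c (right_mem_Icc.2 hc.1.le)).1) hwb.ge
  refine ⟨w, w', _, hw, fun _ _ => rfl, hwb, by rw [hwb', hXub, one_div, inv_inv],
    strictMonoOn_of_le_deriv (convex_Icc a b) hw.1 hm hw',
    fun v hv => ⟨g v, hgmaps (hrange hv), hwg (hrange hv)⟩, g, fun v => (w' (g v))⁻¹, hgw,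
    fun v hv => (hg v (hrange hv)).mono hrange, fun x hx => ?_, fun v hv => ?_⟩
  · obtain ⟨hyx, hyx'⟩ := hyu x hx
    exact hyx ▸ hyx' ▸ hnear x ⟨hx.1, hx.2.trans hc.2.le⟩
  · obtain ⟨hXv, hyXv, hyXv'⟩ := hyX v hv
    have hinverse := abs_inverse_sub_le_and_abs_inverse_deriv_sub_le (convex_Icc a b) hw.1 hm hw'
      hy' hΛ hlip hnear hXv (hgmaps (hrange hv)) (hyXv.trans (hwg (hrange hv)).symm)
    rw [hyXv', inv_inv] at hinverse
    rw [max_mul_of_nonneg _ _ (sq_nonneg h)]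
    exact ⟨(hinverse.1.trans_eq (by ring)).trans (le_max_left _ _),
      (hinverse.2.trans_eq (by ring)).trans (le_max_right _ _)⟩

/-- under hypothesis (H) there are constants `κ₃, κ₄, h₀ > 0` (depending
only on the data of the problem) such that for all meshes of maximal step size `h ≤ h₀`
and every scheme pair `(ũ, x̃)` satisfying the sign inequalities, there is an exact
solution `ǔ` of the straight equation on `[a,b]` with `ǔ(b) = u_b`, `ǔ'(b) = 1/x̃'(u_b)`,
strictly increasing with image covering `[ũ(c), u_b]`, which approximates `ũ` within
`κ₃h²` in the C¹-norm on `[a,c]`, while its inverse `x̌` approximates `x̃` within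
`κ₄h²` in the C¹-norm on `[ũ(c), u_b]`. -/
theorem scheme_approximates_shooting_straight_solution
    (a b c ub : ℝ) (hab : a < b) (hub : 0 < ub) (hc : c ∈ Ioo a b)
    (N : ℝ → ℝ → ℝ) (hN : ContDiff ℝ 2 (Function.uncurry N))
    (hH : HypH N a b) :
    ∃ κ₃ κ₄ h₀ : ℝ, 0 < κ₃ ∧ 0 < κ₄ ∧ 0 < h₀ ∧
      ∀ ms mi : Mesh,
        ms.pt 0 = a → ms.pt ms.n = c → mi.pt 0 = 0 → mi.pt mi.n = ub →
        ∀ u u' X X' : ℝ → ℝ, GoodPair N a b c ub ms mi u u' X X' →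
        ∀ h : ℝ, h ≤ h₀ → StepLe ms mi (u c) h →
        ∃ uc uc' uc'' : ℝ → ℝ,
          IsC2On uc uc' uc'' (Icc a b) ∧
          (∀ x ∈ Icc a b, uc'' x = Ncal N (uc x) x) ∧
          uc b = ub ∧ uc' b = 1 / X' ub ∧
          StrictMonoOn uc (Icc a b) ∧
          Icc (u c) ub ⊆ uc '' Icc a b ∧
          ∃ xc xc' : ℝ → ℝ,
            (∀ x ∈ Icc a b, xc (uc x) = x) ∧
            (∀ v ∈ Icc (u c) ub, HasDerivWithinAt xc (xc' v) (Icc (u c) ub) v) ∧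
            (∀ x ∈ Icc a c,
              |u x - uc x| ≤ κ₃ * h ^ 2 ∧ |u' x - uc' x| ≤ κ₃ * h ^ 2) ∧
            (∀ v ∈ Icc (u c) ub,
              |X v - xc v| ≤ κ₄ * h ^ 2 ∧ |X' v - xc' v| ≤ κ₄ * h ^ 2) :=
  scheme_approximates_shooting_straight_solution_general a b c ub hub hc N hN
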